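/- arXiv:1005.0937 — 3 statements merged into one kernel-verified Lean document; each statement's English description precedes it below -/
import Mathlib

section
/- Let E, F be Banach spaces, A ⊆ E a ξ_E-dense subset, and T : A → F a coarse (M,L)-quasi isometry whose image is ξ_F-dense in F. Then there exists a bijection T̃ : E → F which is a coarse (M, (4M²+3)L + 4ξ_F + 2Mξ_E)-quasi isometry and satisfies ‖T̃x − Tx‖ ≤ (2M²+2)L + 2ξ_F + Mξ_E for all x ∈ A. -/
open Cardinal in
theorem aux_inj {α β : Type} (R : α → β → Prop) (h : ∀ x, #α ≤ #{z | R x z}) :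
    ∃ i : α → β, Function.Injective i ∧ ∀ x, R x (i x) := by
  classical
  obtain ⟨r, hwo, hr⟩ := Cardinal.exists_ord_eq α
  have key : ∀ (x : α) (g : ∀ y, r y x → β), ∃ z, R x z ∧ ∀ y (hy : r y x), g y hy ≠ z := by
    intro x g
    by_contra hcon
    push Not at hcon
    have h1 : #{z | R x z} ≤ #{y // r y x} := by
      have hs : {z | R x z} ⊆ Set.range (fun y : {y // r y x} => g y.1 y.2) := by
        intro z hz
        obtain ⟨y, hy, e⟩ := hcon z hz
        exact ⟨⟨y, hy⟩, e⟩
      exact (Cardinal.mk_le_mk_of_subset hs).trans Cardinal.mk_range_le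
    have h2 : #{y // r y x} < #α := by
      have := Cardinal.card_typein_lt (r := r) x hr
      rwa [Ordinal.card_typein] at this
    exact absurd ((h x).trans h1) (not_le.mpr h2)
  choose f hf1 hf2 using key
  let i : α → β := hwo.wf.fix f
  have hi : ∀ x, i x = f x (fun y _ => i y) := fun x => hwo.wf.fix_eq f x
  refine ⟨i, ?_, ?_⟩
  · intro x y hxy
    rcases trichotomous_of r x y with hlt | heq | hgt
    · exfalso
      have := hf2 y (fun y _ => i y) x hlt
      rw [← hi] at this
      exact this hxy
    · exact heq
    · exfalso
      have := hf2 x (fun y _ => i y) y hgt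
      rw [← hi] at this
      exact this hxy.symm
  · intro x
    rw [hi]
    exact hf1 _ _

theorem aux_sep {F : Type} [NormedAddCommGroup F] [NormedSpace ℝ F] (hF : ¬ FiniteDimensional ℝ F) :
    ∃ S : Set F, S.Infinite ∧ (∀ x ∈ S, ‖x‖ ≤ 1) ∧ (∀ x ∈ S, ∀ y ∈ S, x ≠ y → 1/2 ≤ ‖x - y‖) ∧
      Dense (Submodule.span ℝ S : Set F) := by
  obtain ⟨S, hS⟩ := zorn_subset
    {S : Set F | (∀ x ∈ S, ‖x‖ ≤ 1) ∧ (∀ x ∈ S, ∀ y ∈ S, x ≠ y → 1/2 ≤ ‖x - y‖)} (by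
    intro c hc hch
    refine ⟨⋃₀ c, ⟨?_, ?_⟩, fun s hs => Set.subset_sUnion_of_mem hs⟩
    · rintro x ⟨s, hs, hx⟩
      exact (hc hs).1 x hx
    · rintro x ⟨s, hs, hx⟩ y ⟨t, ht, hy⟩ hne
      rcases hch.total hs ht with h | h
      · exact (hc ht).2 x (h hx) y hy hne
      · exact (hc hs).2 x hx y (h hy) hne)
  have hdense : ∀ x, x ∈ (Submodule.span ℝ S).topologicalClosure := by
    by_contra hcon
    push Not at hcon
    obtain ⟨x, hx, hx1, hxd⟩ := riesz_lemma_of_lt_one (𝕜 := ℝ)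
      (Submodule.isClosed_topologicalClosure (Submodule.span ℝ S)) hcon (r := 1/2) (by norm_num)
    have hsub : ∀ y ∈ S, y ∈ (Submodule.span ℝ S).topologicalClosure := fun y hy =>
      Submodule.le_topologicalClosure _ (Submodule.subset_span hy)
    have hmem : insert x S ∈ {S : Set F | (∀ x ∈ S, ‖x‖ ≤ 1) ∧
        (∀ x ∈ S, ∀ y ∈ S, x ≠ y → 1/2 ≤ ‖x - y‖)} := by
      refine ⟨?_, ?_⟩
      · rintro y (rfl | hy)
        · exact hx1.le
        · exact hS.prop.1 y hy
      · rintro y (rfl | hy) z (rfl | hz) hne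
        · exact absurd rfl hne
        · exact hxd z (hsub z hz)
        · rw [norm_sub_rev]; exact hxd y (hsub y hy)
        · exact hS.prop.2 y hy z hz hne
    have := hS.eq_of_subset hmem (Set.subset_insert _ _)
    exact hx (hsub x (this ▸ Set.mem_insert _ _))
  refine ⟨S, ?_, hS.prop.1, hS.prop.2, fun x => hdense x⟩
  intro hfin
  apply hF
  have : FiniteDimensional ℝ (Submodule.span ℝ S) := FiniteDimensional.span_of_finite ℝ hfin
  have htop : Submodule.span ℝ S = ⊤ := by
    rw [eq_top_iff]
    intro x _
    have hcl := (Submodule.closed_of_finiteDimensional (Submodule.span ℝ S))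
    have := hdense x
    rwa [hcl.submodule_topologicalClosure_eq] at this
  rw [htop] at this
  exact LinearEquiv.finiteDimensional (Submodule.topEquiv (R := ℝ) (M := F))

open Cardinal in
theorem aux_pow {F : Type} [NormedAddCommGroup F] [NormedSpace ℝ F] [CompleteSpace F]
    (hF : ¬ FiniteDimensional ℝ F) : #(ℕ → F) ≤ #F := by
  obtain ⟨S, hinf, hb, hsep, hd⟩ := aux_sep hF
  have : Infinite S := hinf.to_subtype
  -- sequences in `S` embed in `F`
  have h1 : #(ℕ → S) ≤ #F := by
    let f : (ℕ → S) → F := fun s => ∑' k, ((1/8 : ℝ)^k) • (s k : F)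
    have hn : ∀ (s : ℕ → S) k, ‖((1/8 : ℝ)^k) • (s k : F)‖ ≤ (1/8 : ℝ)^k := by
      intro s k
      rw [norm_smul, norm_pow, Real.norm_of_nonneg (by norm_num : (0:ℝ) ≤ 1/8)]
      exact mul_le_of_le_one_right (by positivity) (hb _ (s k).2)
    have hg : HasSum (fun k => (1/8 : ℝ)^k) (8/7) := by
      have := hasSum_geometric_of_lt_one (r := (1/8:ℝ)) (by norm_num) (by norm_num)
      convert this using 1
      norm_num
    have hsum : ∀ s : ℕ → S, Summable (fun k => ((1/8 : ℝ)^k) • (s k : F)) := fun s =>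
      Summable.of_norm_bounded hg.summable (hn s)
    have hfb : ∀ s, ‖f s‖ ≤ 8/7 := fun s => tsum_of_norm_bounded hg (hn s)
    have hrec : ∀ s, f s = (s 0 : F) + (1/8 : ℝ) • f (fun k => s (k+1)) := by
      intro s
      simp only [f]
      rw [(hsum s).tsum_eq_zero_add, ← (hsum (fun k => s (k+1))).tsum_const_smul]
      simp only [pow_zero, one_smul, smul_smul, pow_succ']
    have hstep : ∀ s t, f s = f t → s 0 = t 0 ∧ f (fun k => s (k+1)) = f (fun k => t (k+1)) := by
      intro s t h
      rw [hrec s, hrec t] at h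
      have h0 : s 0 = t 0 := by
        by_contra hne
        have h2 := hsep _ (s 0).2 _ (t 0).2 (fun e => hne (Subtype.ext e))
        have h3 : (s 0 : F) - t 0 = (1/8 : ℝ) • (f (fun k => t (k+1)) - f (fun k => s (k+1))) := by
          rw [smul_sub, sub_eq_sub_iff_add_eq_add, h, add_comm]
        rw [h3, norm_smul, Real.norm_of_nonneg (by norm_num : (0:ℝ) ≤ 1/8)] at h2
        have h4 := norm_sub_le (f (fun k => t (k+1))) (f (fun k => s (k+1)))
        have h5 := hfb (fun k => t (k+1))
        have h6 := hfb (fun k => s (k+1))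
        linarith
      refine ⟨h0, ?_⟩
      rw [h0] at h
      exact smul_right_injective F (by norm_num : (1/8:ℝ) ≠ 0) (add_left_cancel h)
    have hall : ∀ k s t, f s = f t → s k = t k := by
      intro k
      induction k with
      | zero => exact fun s t h => (hstep s t h).1
      | succ k ih => exact fun s t h => ih _ _ (hstep s t h).2
    exact Cardinal.mk_le_of_injective (f := f) (fun s t h => funext fun k => hall k s t h)
  -- `F` embeds in sequences in the span
  let D := Submodule.span ℝ S
  have h2 : #F ≤ #(ℕ → D) := by
    have : ∀ x : F, ∃ u : ℕ → D, Filter.Tendsto (fun n => (u n : F)) Filter.atTop (nhds x) := by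
      intro x
      obtain ⟨u, hu, hlim⟩ := mem_closure_iff_seq_limit.1 (hd x)
      exact ⟨fun n => ⟨u n, hu n⟩, hlim⟩
    choose u hu using this
    refine Cardinal.mk_le_of_injective (f := u) (fun x y h => ?_)
    have := hu y
    rw [← h] at this
    exact tendsto_nhds_unique (hu x) this
  have h3 : #D ≤ max #S 𝔠 := by
    have : Function.Surjective (fun c : S →₀ ℝ => (⟨Finsupp.linearCombination ℝ (Subtype.val : S → F) c, by
        have := Finsupp.mem_span_iff_linearCombination ℝ S (Finsupp.linearCombination ℝ (Subtype.val : S → F) c)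
        exact this.2 ⟨c, rfl⟩⟩ : D)) := by
      rintro ⟨x, hx⟩
      obtain ⟨c, hc⟩ := (Finsupp.mem_span_iff_linearCombination ℝ S x).1 hx
      exact ⟨c, Subtype.ext hc⟩
    refine (Cardinal.mk_le_of_surjective this).trans ?_
    rw [Cardinal.mk_finsupp_of_infinite, Cardinal.mk_real]
  have hS0 : ℵ₀ ≤ #S := Cardinal.aleph0_le_mk S
  have hSne : #S ≠ 0 := (Cardinal.aleph0_pos.trans_le hS0).ne'
  have h4 : #D ≤ #S ^ ℵ₀ := by
    refine h3.trans (max_le (Cardinal.self_le_power _ Cardinal.one_le_aleph0) ?_)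
    rw [← Cardinal.two_power_aleph0]
    exact Cardinal.power_le_power_right ((Cardinal.natCast_lt_aleph0 (n := 2)).le.trans hS0)
  have e : ∀ X : Type, #(ℕ → X) = #X ^ ℵ₀ := fun X => by simp
  calc #(ℕ → F) = #F ^ ℵ₀ := e F
    _ ≤ ((#S ^ ℵ₀) ^ ℵ₀) ^ ℵ₀ := by
        refine Cardinal.power_le_power_right (h2.trans ?_)
        rw [e]
        exact Cardinal.power_le_power_right h4
    _ = #S ^ ℵ₀ := by rw [← Cardinal.power_mul, ← Cardinal.power_mul]; simp
    _ = #(ℕ → S) := (e S).symm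
    _ ≤ #F := h1

/-- Figiel-type inequality for isometric embeddings. -/
theorem aux_figiel {E F : Type} [NormedAddCommGroup E] [NormedSpace ℝ E]
    [NormedAddCommGroup F] [NormedSpace ℝ F] (S : F → E)
    (hS : ∀ p q, ‖S p - S q‖ = ‖p - q‖) (h0 : S 0 = 0) (p q r : F) (n : ℝ) :
    ‖r‖ ≤ ‖S r - n • (S p + S q - S (p + q))‖ := by
  set z := S r - n • (S p + S q - S (p + q)) with hz
  let G : Submodule ℝ F := Submodule.span ℝ {p, q, r}
  have hfin : FiniteDimensional ℝ G := FiniteDimensional.span_of_finite ℝ (by simp)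
  let p' : G := ⟨p, Submodule.subset_span (by simp)⟩
  let q' : G := ⟨q, Submodule.subset_span (by simp)⟩
  let r' : G := ⟨r, Submodule.subset_span (by simp)⟩
  have key : ∀ u : G, DifferentiableAt ℝ (fun x : G => ‖x‖) u →
      fderiv ℝ (fun x : G => ‖x‖) u r' ≤ ‖z‖ := by
    intro u hu
    set k := fderiv ℝ (fun x : G => ‖x‖) u with hk
    have hlim : ∀ v : G, Filter.Tendsto
        (fun m : ℕ => (m : ℝ) • (‖u + (m : ℝ)⁻¹ • v‖ - ‖u‖)) Filter.atTop (nhds (k v)) := by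
      intro v
      apply hu.hasFDerivAt.lim v (c := fun m : ℕ => (m : ℝ))
      simp only [Real.norm_natCast]
      exact tendsto_natCast_atTop_atTop
    have hex : ∀ m : ℕ, ∃ h : StrongDual ℝ E, ‖h‖ ≤ 1 ∧
        h (S ((m : ℝ) • (u : F)) - S (-((m : ℝ) • (u : F)))) = 2 * m * ‖u‖ := by
      intro m
      obtain ⟨h, h1, h2⟩ := exists_dual_vector'' ℝ (S ((m : ℝ) • (u : F)) - S (-((m : ℝ) • (u : F))))
      refine ⟨h, h1, ?_⟩
      rw [h2, hS, sub_neg_eq_add, ← two_smul ℝ, norm_smul, norm_smul]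
      simp [mul_assoc]
    choose h h1 h2 using hex
    have hle : ∀ m (x y : F), h m (S x) - h m (S y) ≤ ‖x - y‖ := by
      intro m x y
      rw [← map_sub, ← hS]
      exact (le_abs_self _).trans (by simpa using (h m).le_of_opNorm_le (h1 m) (S x - S y))
    have hmu : ∀ m : ℕ, ‖(m : ℝ) • (u : F)‖ = m * ‖u‖ := by
      intro m
      rw [norm_smul]; simp
    have hval : ∀ m : ℕ, h m (S ((m : ℝ) • (u : F))) = m * ‖u‖ ∧
        h m (S (-((m : ℝ) • (u : F)))) = -(m * ‖u‖) := by
      intro m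
      have a1 := hle m ((m : ℝ) • (u : F)) 0
      have a2 := hle m 0 (-((m : ℝ) • (u : F)))
      have a3 := h2 m
      rw [map_sub] at a3
      simp only [h0, map_zero, sub_zero, zero_sub, neg_neg, hmu] at a1 a2
      constructor <;> linarith
    have hconv : ∀ v : G, Filter.Tendsto (fun m : ℕ => h m (S (v : F))) Filter.atTop
        (nhds (k v)) := by
      intro v
      have l1 := (hlim (-v)).neg
      rw [map_neg, neg_neg] at l1
      refine tendsto_of_tendsto_of_tendsto_of_le_of_le' l1 (hlim v) ?_ ?_
      · filter_upwards [Filter.eventually_gt_atTop 0] with m hm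
        have hm' : (m : ℝ) ≠ 0 := by positivity
        have e1 : (m : ℝ) * ‖u + (m : ℝ)⁻¹ • (-v)‖ = ‖(m : ℝ) • (u : F) - v‖ := by
          have : (m : ℝ) * ‖u + (m : ℝ)⁻¹ • (-v)‖ = ‖(m : ℝ) • (u + (m : ℝ)⁻¹ • (-v))‖ := by
            rw [norm_smul]; simp
          rw [this, smul_add, smul_smul, mul_inv_cancel₀ hm', one_smul, ← sub_eq_add_neg]
          rfl
        have e2 := hle m ((m : ℝ) • (u : F)) v
        rw [(hval m).1] at e2
        rw [smul_eq_mul, mul_sub, e1]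
        linarith
      · filter_upwards [Filter.eventually_gt_atTop 0] with m hm
        have hm' : (m : ℝ) ≠ 0 := by positivity
        have e1 : (m : ℝ) * ‖u + (m : ℝ)⁻¹ • v‖ = ‖(v : F) - (-((m : ℝ) • (u : F)))‖ := by
          have : (m : ℝ) * ‖u + (m : ℝ)⁻¹ • v‖ = ‖(m : ℝ) • (u + (m : ℝ)⁻¹ • v)‖ := by
            rw [norm_smul]; simp
          rw [this, smul_add, smul_smul, mul_inv_cancel₀ hm', one_smul, sub_neg_eq_add, add_comm]
          rfl
        have e2 := hle m v (-((m : ℝ) • (u : F)))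
        rw [(hval m).2] at e2
        rw [smul_eq_mul, mul_sub, e1]
        linarith
    have hz' : Filter.Tendsto (fun m : ℕ => h m z) Filter.atTop (nhds (k r')) := by
      have t := (hconv r').sub (((hconv p').add (hconv q')).sub (hconv (p' + q')) |>.const_mul n)
      rw [map_add, sub_self, mul_zero, sub_zero] at t
      refine t.congr (fun m => ?_)
      simp [hz, p', q', r']
    refine le_of_tendsto' hz' (fun m => ?_)
    exact (le_abs_self _).trans (by simpa using (h m).le_of_opNorm_le (h1 m) z)
  refine le_of_forall_pos_le_add (fun ε hε => ?_)
  obtain ⟨u, hu, hdist⟩ := (dense_differentiableAt_norm (E := G)).exists_dist_lt r' (half_pos hε)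
  have k1 := key u hu
  have k2 : fderiv ℝ (fun x : G => ‖x‖) u u = ‖u‖ := DifferentiableAt.fderiv_norm_self hu
  have k3 : ‖fderiv ℝ (fun x : G => ‖x‖) u‖ ≤ 1 := by
    exact (norm_fderiv_le_of_lipschitz ℝ (x₀ := u) (lipschitzWith_one_norm (E := G))).trans_eq
      NNReal.coe_one
  have k4 : fderiv ℝ (fun x : G => ‖x‖) u (u - r') ≤ ‖u - r'‖ :=
    (le_abs_self _).trans (by
      simpa using (fderiv ℝ (fun x : G => ‖x‖) u).le_of_opNorm_le k3 (u - r'))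
  rw [map_sub, k2] at k4
  have k5 : ‖r'‖ ≤ ‖u‖ + ‖u - r'‖ := by
    have := norm_sub_norm_le r' u
    rw [norm_sub_rev] at this
    linarith
  rw [dist_eq_norm, norm_sub_rev] at hdist
  have k6 : ‖r'‖ = ‖r‖ := rfl
  linarith

theorem aux_arch {E : Type} [NormedAddCommGroup E] [NormedSpace ℝ E] (z : E) (c : ℝ)
    (h : ∀ n : ℕ, (n : ℝ) * ‖z‖ ≤ c) : z = 0 := by
  by_contra hz
  have hz' : 0 < ‖z‖ := norm_pos_iff.2 hz
  obtain ⟨n, hn⟩ := exists_nat_gt (c / ‖z‖)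
  rw [div_lt_iff₀ hz'] at hn
  linarith [h n]

/-- An isometric embedding with coarsely dense image is onto. -/
theorem aux_onto {E F : Type} [NormedAddCommGroup E] [NormedSpace ℝ E]
    [NormedAddCommGroup F] [NormedSpace ℝ F] [CompleteSpace F] (S : F → E)
    (hS : ∀ p q, ‖S p - S q‖ = ‖p - q‖) (ξ : ℝ) (hd : ∀ x, ∃ p, ‖x - S p‖ ≤ ξ) :
    Function.Surjective S := by
  let S' : F → E := fun p => S p - S 0
  have hS' : ∀ p q, ‖S' p - S' q‖ = ‖p - q‖ := by
    intro p q
    simp only [S', sub_sub_sub_cancel_right]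
    exact hS p q
  have h0 : S' 0 = 0 := by simp [S']
  have hnorm : ∀ p, ‖S' p‖ = ‖p‖ := by
    intro p
    have := hS' p 0
    rwa [h0, sub_zero, sub_zero] at this
  have hd' : ∀ x, ∃ p, ‖x - S' p‖ ≤ ξ := by
    intro x
    obtain ⟨p, hp⟩ := hd (x + S 0)
    refine ⟨p, ?_⟩
    convert hp using 2
    simp only [S']; abel
  have hadd : ∀ p q, S' (p + q) = S' p + S' q := by
    intro p q
    have : S' p + S' q - S' (p + q) = 0 := by
      apply aux_arch _ (2 * ξ)
      intro n
      obtain ⟨r, hr⟩ := hd' ((n : ℝ) • (S' p + S' q - S' (p + q)))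
      have h1 := aux_figiel S' hS' h0 p q r n
      rw [norm_sub_rev] at h1
      have h2 := norm_sub_norm_le ((n : ℝ) • (S' p + S' q - S' (p + q))) (S' r)
      rw [hnorm] at h2
      rw [norm_smul, Real.norm_natCast] at h2
      linarith
    exact (sub_eq_zero.1 this).symm
  have hiso : Isometry S' := Isometry.of_dist_eq (fun p q => by
    rw [dist_eq_norm, dist_eq_norm, hS'])
  let f : F →+ E := ⟨⟨S', h0⟩, hadd⟩
  let Λ : F →L[ℝ] E := f.toRealLinearMap hiso.continuous
  have hΛ : ∀ p, Λ p = S' p := fun p => rfl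
  have hcl : IsClosed (Set.range S') := hiso.isClosedEmbedding.isClosed_range
  have hsurj : ∀ z, z ∈ Set.range S' := by
    intro z
    rw [← hcl.closure_eq, Metric.mem_closure_iff]
    intro ε hε
    obtain ⟨n, hn⟩ := exists_nat_gt (max (ξ / ε) 0)
    have hn0 : (0 : ℝ) < n := (le_max_right _ _).trans_lt hn
    have hn1 := (le_max_left _ _).trans_lt hn
    obtain ⟨p, hp⟩ := hd' ((n : ℝ) • z)
    refine ⟨S' ((n : ℝ)⁻¹ • p), ⟨_, rfl⟩, ?_⟩
    rw [← hΛ, map_smul, hΛ, dist_eq_norm]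
    have e : z - (n : ℝ)⁻¹ • S' p = (n : ℝ)⁻¹ • ((n : ℝ) • z - S' p) := by
      rw [smul_sub _ ((n : ℝ) • z) (S' p), smul_smul, inv_mul_cancel₀ hn0.ne', one_smul]
    rw [e, norm_smul, norm_inv, Real.norm_natCast, inv_mul_lt_iff₀ hn0]
    rw [div_lt_iff₀ hε] at hn1
    linarith
  intro z
  obtain ⟨p, hp⟩ := hsurj (z - S 0)
  exact ⟨p, sub_left_injective hp⟩

theorem aux_one_le {E F : Type} [NormedAddCommGroup E] [NormedSpace ℝ E]
    [NormedAddCommGroup F] [Nontrivial E]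
    (M L ξE : ℝ) (hM : 0 < M)
    (A : Set E) (hA : ∀ x : E, ∃ a ∈ A, ‖x - a‖ ≤ ξE)
    (T : E → F)
    (hTlow : ∀ x ∈ A, ∀ y ∈ A, (1 / M) * ‖x - y‖ - L ≤ ‖T x - T y‖)
    (hTup : ∀ x ∈ A, ∀ y ∈ A, ‖T x - T y‖ ≤ M * ‖x - y‖ + L) : 1 ≤ M := by
  by_contra hlt
  push Not at hlt
  have hpos : 0 < 1 / M - M := by
    have : 1 < 1 / M := by rw [lt_div_iff₀ hM]; linarith
    linarith
  obtain ⟨x, hx⟩ := exists_ne (0 : E)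
  apply hx
  apply aux_arch x (2 * ξE + 2 * L / (1 / M - M))
  intro n
  obtain ⟨a, ha, ha'⟩ := hA 0
  obtain ⟨b, hb, hb'⟩ := hA ((n : ℝ) • x)
  have h1 := hTlow a ha b hb
  have h2 := hTup a ha b hb
  have h3 : ‖a - b‖ ≤ 2 * L / (1 / M - M) := by
    rw [le_div_iff₀ hpos]; linarith
  have h4 : ‖(n : ℝ) • x‖ ≤ ‖(n : ℝ) • x - b‖ + ‖a - b‖ + ‖0 - a‖ := by
    have e : (n : ℝ) • x = ((n : ℝ) • x - b) - (a - b) - (0 - a) := by abel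
    calc ‖(n : ℝ) • x‖ = ‖((n : ℝ) • x - b) - (a - b) - (0 - a)‖ := by rw [← e]
      _ ≤ _ := (norm_sub_le _ _).trans (by gcongr; exact norm_sub_le _ _)
  rw [norm_smul, Real.norm_natCast] at h4
  linarith

open Cardinal in
theorem aux_card {E F : Type} [NormedAddCommGroup E] [NormedSpace ℝ E] [CompleteSpace E]
    [NormedAddCommGroup F] [NormedSpace ℝ F] [CompleteSpace F]
    (hE : ¬ FiniteDimensional ℝ E) (hF : ¬ FiniteDimensional ℝ F)
    (M L ξE ξF : ℝ) (hM : 0 < M)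
    (A : Set E) (hA : ∀ x : E, ∃ a ∈ A, ‖x - a‖ ≤ ξE)
    (T : E → F)
    (hTlow : ∀ x ∈ A, ∀ y ∈ A, (1 / M) * ‖x - y‖ - L ≤ ‖T x - T y‖)
    (hTdense : ∀ z : F, ∃ a ∈ A, ‖z - T a‖ ≤ ξF) : #E = #F := by
  choose a haA ha using hA
  choose b hbA hb using hTdense
  apply le_antisymm
  · refine le_trans ?_ (aux_pow hF)
    refine Cardinal.mk_le_of_injective (f := fun x (k : ℕ) => T (a ((k : ℝ) • x))) ?_
    intro x y hxy
    rw [← sub_eq_zero]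
    apply aux_arch _ (2 * ξE + M * L)
    intro n
    have h1 := congrFun hxy n
    simp only at h1
    have h2 := hTlow _ (haA ((n : ℝ) • x)) _ (haA ((n : ℝ) • y))
    rw [h1, sub_self, norm_zero] at h2
    have h3 : ‖a ((n : ℝ) • x) - a ((n : ℝ) • y)‖ ≤ M * L := by
      rw [sub_nonpos, one_div, inv_mul_le_iff₀ hM] at h2
      exact h2
    have h4 := ha ((n : ℝ) • x)
    have h5 := ha ((n : ℝ) • y)
    have e : (n : ℝ) • (x - y) = ((n : ℝ) • x - a ((n : ℝ) • x)) +
      (a ((n : ℝ) • x) - a ((n : ℝ) • y)) - ((n : ℝ) • y - a ((n : ℝ) • y)) := by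
      rw [smul_sub]; abel
    have h6 : ‖(n : ℝ) • (x - y)‖ ≤ ξE + M * L + ξE := by
      rw [e]
      exact (norm_sub_le _ _).trans (add_le_add ((norm_add_le _ _).trans (add_le_add h4 h3)) h5)
    rw [norm_smul, Real.norm_natCast] at h6
    linarith
  · refine le_trans ?_ (aux_pow hE)
    refine Cardinal.mk_le_of_injective (f := fun x (k : ℕ) => b ((k : ℝ) • x)) ?_
    intro x y hxy
    rw [← sub_eq_zero]
    apply aux_arch _ (2 * ξF)
    intro n
    have h1 := congrFun hxy n
    simp only at h1
    have h4 := hb ((n : ℝ) • x)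
    have h5 := hb ((n : ℝ) • y)
    rw [← h1] at h5
    have h6 : ‖(n : ℝ) • (x - y)‖ ≤ ξF + ξF := by
      rw [smul_sub, ← sub_sub_sub_cancel_right _ _ (T (b ((n : ℝ) • x)))]
      exact (norm_sub_le _ _).trans (add_le_add h4 h5)
    rw [norm_smul, Real.norm_natCast] at h6
    linarith

/-- A strictly contracting map with bounded displacement. -/
noncomputable def auxRho {F : Type} [NormedAddCommGroup F] [NormedSpace ℝ F] (ε : ℝ) (p : F) : F :=
  (1 - ε / (1 + ‖p‖)) • p

theorem auxRho_sub {F : Type} [NormedAddCommGroup F] [NormedSpace ℝ F] (ε : ℝ) (hε : 0 ≤ ε)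
    (p : F) : ‖auxRho ε p - p‖ ≤ ε := by
  have e : auxRho ε p - p = (-(ε / (1 + ‖p‖))) • p := by
    unfold auxRho; rw [sub_smul, one_smul, neg_smul]; abel
  have hp := norm_nonneg p
  rw [e, norm_smul, norm_neg, Real.norm_of_nonneg (by positivity), div_mul_eq_mul_div,
    div_le_iff₀ (by positivity)]
  nlinarith

theorem auxRho_contract_aux {F : Type} [NormedAddCommGroup F] [NormedSpace ℝ F] (ε c δ : ℝ)
    (hε : 0 < ε) (hε1 : ε ≤ 1) (hc : 0 ≤ c) (hc1 : 4 * c ≤ ε * δ) (hc2 : 4 * c ≤ ε)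
    (p q : F) (hqp : ‖q‖ ≤ ‖p‖) (hd : δ ≤ ‖p - q‖) :
    ‖auxRho ε p - auxRho ε q‖ + c / (1 + ‖p‖) ^ 2 + c / (1 + ‖q‖) ^ 2 ≤ ‖p - q‖ := by
  have hP := norm_nonneg p
  have hQ := norm_nonneg q
  have hD := norm_nonneg (p - q)
  have htri : ‖p‖ - ‖q‖ ≤ ‖p - q‖ := norm_sub_norm_le p q
  have e : auxRho ε p - auxRho ε q = (1 - ε / (1 + ‖q‖)) • (p - q) +
      (ε / (1 + ‖q‖) - ε / (1 + ‖p‖)) • p := by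
    unfold auxRho; module
  have h1 : 0 ≤ 1 - ε / (1 + ‖q‖) := by
    rw [sub_nonneg, div_le_one (by positivity)]; linarith
  have h2 : 0 ≤ ε / (1 + ‖q‖) - ε / (1 + ‖p‖) := by
    rw [sub_nonneg]; gcongr
  have h3 : ‖auxRho ε p - auxRho ε q‖ ≤ (1 - ε / (1 + ‖q‖)) * ‖p - q‖ +
      (ε / (1 + ‖q‖) - ε / (1 + ‖p‖)) * ‖p‖ := by
    rw [e]
    refine (norm_add_le _ _).trans ?_
    rw [norm_smul, norm_smul, Real.norm_of_nonneg h1, Real.norm_of_nonneg h2]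
  have h4 : c / (1 + ‖p‖) ^ 2 ≤ c / (1 + ‖q‖) ^ 2 := by gcongr
  generalize ‖p‖ = P at *
  generalize ‖q‖ = Q at *
  generalize ‖p - q‖ = D at *
  have h5 : (ε / (1 + Q) - ε / (1 + P)) * P ≤ ε * D * P / ((1 + Q) * (1 + P)) := by
    have : (ε / (1 + Q) - ε / (1 + P)) * P = ε * (P - Q) * P / ((1 + Q) * (1 + P)) := by
      field_simp; ring
    rw [this]
    gcongr
  have h6 : (1 - ε / (1 + Q)) * D + ε * D * P / ((1 + Q) * (1 + P)) =
      D - ε * D / ((1 + Q) * (1 + P)) := by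
    field_simp; ring
  have h7 : 2 * (c / (1 + Q) ^ 2) ≤ ε * D / ((1 + Q) * (1 + P)) := by
    rw [← mul_div_assoc, div_le_div_iff₀ (by positivity) (by positivity)]
    have a1 : 4 * c ≤ ε * D := hc1.trans (by gcongr)
    have a2 : 4 * c * D ≤ ε * D := by gcongr
    have a3 : 2 * c * (1 + P) ≤ ε * D * (1 + Q) := by
      have : 2 * c * (1 + P) ≤ 2 * c * (1 + Q + D) :=
    mul_le_mul_of_nonneg_left (by linarith) (by positivity)
      nlinarith
    calc 2 * c * ((1 + Q) * (1 + P)) = (2 * c * (1 + P)) * (1 + Q) := by ring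
      _ ≤ (ε * D * (1 + Q)) * (1 + Q) := by gcongr
      _ = ε * D * (1 + Q) ^ 2 := by ring
  linarith

theorem auxRho_contract {F : Type} [NormedAddCommGroup F] [NormedSpace ℝ F] (ε c δ : ℝ)
    (hε : 0 < ε) (hε1 : ε ≤ 1) (hc : 0 ≤ c) (hc1 : 4 * c ≤ ε * δ) (hc2 : 4 * c ≤ ε)
    (p q : F) (hd : δ ≤ ‖p - q‖) :
    ‖auxRho ε p - auxRho ε q‖ + c / (1 + ‖p‖) ^ 2 + c / (1 + ‖q‖) ^ 2 ≤ ‖p - q‖ := by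
  rcases le_total ‖q‖ ‖p‖ with h | h
  · exact auxRho_contract_aux ε c δ hε hε1 hc hc1 hc2 p q h hd
  · have := auxRho_contract_aux ε c δ hε hε1 hc hc1 hc2 q p h (by rwa [norm_sub_rev])
    rw [norm_sub_rev p q, norm_sub_rev (auxRho ε p)]
    linarith

theorem aux_near {E : Type} [NormedAddCommGroup E] (x y a b : E) (ξ : ℝ)
    (ha : ‖x - a‖ ≤ ξ) (hb : ‖y - b‖ ≤ ξ) :
    ‖a - b‖ ≤ ‖x - y‖ + 2 * ξ ∧ ‖x - y‖ ≤ ‖a - b‖ + 2 * ξ := by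
  constructor
  · have e : a - b = (x - y) - (x - a) + (y - b) := by abel
    have h1 := norm_add_le ((x - y) - (x - a)) (y - b)
    have h2 := norm_sub_le (x - y) (x - a)
    rw [← e] at h1
    linarith
  · have e : x - y = (a - b) + (x - a) - (y - b) := by abel
    have h1 := norm_sub_le ((a - b) + (x - a)) (y - b)
    have h2 := norm_add_le (a - b) (x - a)
    rw [← e] at h1
    linarith

/-- perturbation: `u` close to `a`, `v` close to `b`. -/
theorem aux_near2 {E : Type} [NormedAddCommGroup E] (u v a b : E) (s t : ℝ)
    (ha : ‖u - a‖ ≤ s) (hb : ‖v - b‖ ≤ t) :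
    ‖u - v‖ ≤ ‖a - b‖ + s + t ∧ ‖a - b‖ ≤ ‖u - v‖ + s + t := by
  constructor
  · have e : u - v = (a - b) + (u - a) - (v - b) := by abel
    have h1 := norm_sub_le ((a - b) + (u - a)) (v - b)
    have h2 := norm_add_le (a - b) (u - a)
    rw [← e] at h1
    linarith
  · have e : a - b = (u - v) - (u - a) + (v - b) := by abel
    have h1 := norm_add_le ((u - v) - (u - a)) (v - b)
    have h2 := norm_sub_le (u - v) (u - a)
    rw [← e] at h1
    linarith

open Cardinal in
theorem aux_case_pos {E F : Type} [NormedAddCommGroup E] [NormedSpace ℝ E]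
    [NormedAddCommGroup F] [NormedSpace ℝ F] (hcard : #E = #F)
    (M L ξE ξF : ℝ) (hM : 1 ≤ M) (hL : 0 ≤ L) (hξE : 0 ≤ ξE) (hξF : 0 ≤ ξF)
    (hpos : 0 < L + ξF)
    (A : Set E) (hA : ∀ x : E, ∃ a ∈ A, ‖x - a‖ ≤ ξE)
    (T : E → F)
    (hTlow : ∀ x ∈ A, ∀ y ∈ A, (1 / M) * ‖x - y‖ - L ≤ ‖T x - T y‖)
    (hTup : ∀ x ∈ A, ∀ y ∈ A, ‖T x - T y‖ ≤ M * ‖x - y‖ + L)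
    (hTdense : ∀ z : F, ∃ a ∈ A, ‖z - T a‖ ≤ ξF) :
    ∃ T' : E → F, Function.Bijective T' ∧
      (∀ x y : E, (1 / M) * ‖x - y‖ - ((4 * M ^ 2 + 3) * L + 4 * ξF + 2 * M * ξE) ≤
        ‖T' x - T' y‖) ∧
      (∀ x y : E, ‖T' x - T' y‖ ≤ M * ‖x - y‖ + ((4 * M ^ 2 + 3) * L + 4 * ξF + 2 * M * ξE)) ∧
      ∀ x ∈ A, ‖T' x - T x‖ ≤ (2 * M ^ 2 + 2) * L + 2 * ξF + M * ξE := by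
  have hM0 : 0 < M := by linarith
  have hM2 : 1 ≤ M ^ 2 := one_le_pow₀ hM
  set κ := (2 * M ^ 2 + 1) * L + 2 * ξF with hκ
  have hML : L ≤ M ^ 2 * L := le_mul_of_one_le_left hL hM2
  have hslack : 0 < κ - ξF - L := by
    have : κ - ξF - L = 2 * (M ^ 2 * L) + ξF := by rw [hκ]; ring
    linarith
  have hκpos : 0 < κ := by linarith
  let R : E → F → Prop := fun x z =>
    ∃ a ∈ A, ‖x - a‖ ≤ ξE ∧ (x ∈ A → a = x) ∧ ‖z - T a‖ ≤ κ
  have hR1 : ∀ x, #E ≤ #{z | R x z} := by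
    intro x
    obtain ⟨a, haA, ha, hax⟩ : ∃ a ∈ A, ‖x - a‖ ≤ ξE ∧ (x ∈ A → a = x) := by
      by_cases hx : x ∈ A
      · exact ⟨x, hx, by simpa using hξE, fun _ => rfl⟩
      · obtain ⟨a, h1, h2⟩ := hA x
        exact ⟨a, h1, h2, fun h => absurd h hx⟩
    have hmem : {z | R x z} ∈ nhds (T a) := by
      refine Filter.mem_of_superset (Metric.ball_mem_nhds (T a) hκpos) (fun z hz => ?_)
      rw [Metric.mem_ball, dist_eq_norm] at hz
      exact ⟨a, haA, ha, hax, hz.le⟩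
    rw [cardinal_eq_of_mem_nhds ℝ hmem, hcard]
  have hR2 : ∀ z, #F ≤ #{x | R x z} := by
    intro z
    obtain ⟨a, haA, ha⟩ := hTdense z
    obtain ⟨r, hr0, hr1, hr2⟩ : ∃ r : ℝ, 0 < r ∧ M * r ≤ κ - ξF - L ∧ (ξE = 0 ∨ r ≤ ξE) := by
      rcases hξE.eq_or_lt with h | h
      · refine ⟨(κ - ξF - L) / M, by positivity, ?_, Or.inl h.symm⟩
        rw [mul_div_cancel₀ _ hM0.ne']
      · refine ⟨min ((κ - ξF - L) / M) ξE, lt_min (by positivity) h, ?_, Or.inr (min_le_right _ _)⟩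
        calc M * min ((κ - ξF - L) / M) ξE ≤ M * ((κ - ξF - L) / M) := by
              gcongr; exact min_le_left _ _
          _ = _ := by rw [mul_div_cancel₀ _ hM0.ne']
    have hmem : {x | R x z} ∈ nhds a := by
      refine Filter.mem_of_superset (Metric.ball_mem_nhds a hr0) (fun x hx => ?_)
      rw [Metric.mem_ball, dist_eq_norm] at hx
      by_cases hxA : x ∈ A
      · refine ⟨x, hxA, by simpa using hξE, fun _ => rfl, ?_⟩
        have h1 := hTup a haA x hxA
        have h2 := norm_sub_le_norm_sub_add_norm_sub z (T a) (T x)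
        rw [norm_sub_rev a x] at h1
        have h3 : M * ‖x - a‖ ≤ M * r := by gcongr
        linarith
      · refine ⟨a, haA, ?_, fun h => absurd h hxA, by linarith⟩
        rcases hr2 with h | h
        · exfalso
          obtain ⟨b, hb, hb'⟩ := hA x
          rw [h] at hb'
          have : x = b := sub_eq_zero.1 (norm_le_zero_iff.1 hb')
          exact hxA (this ▸ hb)
        · linarith
    rw [cardinal_eq_of_mem_nhds ℝ hmem, hcard]
  obtain ⟨i, hi, hiR⟩ := aux_inj R hR1
  obtain ⟨j, hj, hjR⟩ := aux_inj (fun z x => R x z) hR2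
  obtain ⟨T', hbij, hT'⟩ := Function.Embedding.schroeder_bernstein_of_rel hi hj R hiR hjR
  have hinv : 1 / M ≤ M := by
    rw [div_le_iff₀ hM0]; nlinarith
  refine ⟨T', hbij, ?_, ?_, ?_⟩
  · intro x y
    obtain ⟨a, haA, hxa, -, hza⟩ := hT' x
    obtain ⟨b, hbA, hyb, -, hzb⟩ := hT' y
    have h1 := (aux_near x y a b ξE hxa hyb).2
    have h2 := (aux_near2 _ _ _ _ _ _ hza hzb).2
    have h3 := hTlow a haA b hbA
    have h4 : 1 / M * ‖x - y‖ ≤ 1 / M * (‖a - b‖ + 2 * ξE) := by gcongr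
    have h5 : 1 / M * ξE ≤ M * ξE := by gcongr
    rw [hκ] at h2
    linarith
  · intro x y
    obtain ⟨a, haA, hxa, -, hza⟩ := hT' x
    obtain ⟨b, hbA, hyb, -, hzb⟩ := hT' y
    have h1 := (aux_near x y a b ξE hxa hyb).1
    have h2 := (aux_near2 _ _ _ _ _ _ hza hzb).1
    have h3 := hTup a haA b hbA
    have h4 : M * ‖a - b‖ ≤ M * (‖x - y‖ + 2 * ξE) := by gcongr
    rw [hκ] at h2
    linarith
  · intro x hx
    obtain ⟨a, haA, hxa, hax, hza⟩ := hT' x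
    rw [hax hx] at hza
    have : 0 ≤ M * ξE := by positivity
    rw [hκ] at hza
    linarith

open Cardinal in
theorem aux_case_zero {E F : Type} [NormedAddCommGroup E] [NormedSpace ℝ E]
    [NormedAddCommGroup F] [NormedSpace ℝ F] (hcard : #E = #F)
    (M ξ : ℝ) (hM : 1 < M) (hξ : 0 < ξ)
    (A : Set E) (hA : ∀ x : E, ∃ a ∈ A, ‖x - a‖ ≤ ξ)
    (T : E → F)
    (hTlow : ∀ x ∈ A, ∀ y ∈ A, (1 / M) * ‖x - y‖ ≤ ‖T x - T y‖)
    (hTup : ∀ x ∈ A, ∀ y ∈ A, ‖T x - T y‖ ≤ M * ‖x - y‖)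
    (hsurj : ∀ z : F, ∃ a ∈ A, T a = z) :
    ∃ T' : E → F, Function.Bijective T' ∧
      (∀ x y : E, (1 / M) * ‖x - y‖ - 2 * M * ξ ≤ ‖T' x - T' y‖) ∧
      (∀ x y : E, ‖T' x - T' y‖ ≤ M * ‖x - y‖ + 2 * M * ξ) ∧
      ∀ x ∈ A, ‖T' x - T x‖ ≤ M * ξ := by
  have hM0 : 0 < M := by linarith
  have hinv : 1 / M < 1 := by rw [div_lt_iff₀ hM0]; linarith
  have hgap : 0 < (M - 1 / M) * ξ := mul_pos (by linarith) hξ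
  have hinv0 : 0 < 1 / M := by positivity
  have hMξ : 0 < M * ξ := by positivity
  have hgapM : (M - 1 / M) * ξ ≤ M * ξ := by gcongr; linarith
  -- parameters
  obtain ⟨ε, hε, hε1, hε2⟩ : ∃ ε : ℝ, 0 < ε ∧ ε ≤ 1 ∧ 4 * ε ≤ (M - 1 / M) * ξ :=
    ⟨min 1 ((M - 1 / M) * ξ / 4), lt_min one_pos (by positivity), min_le_left _ _, by
      have := min_le_right 1 ((M - 1 / M) * ξ / 4); linarith⟩
  obtain ⟨c, hc, hc1, hc2⟩ : ∃ c : ℝ, 0 < c ∧ 4 * c ≤ ε * (M * ξ) ∧ 4 * c ≤ ε :=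
    ⟨min (ε * (M * ξ) / 4) (ε / 4), lt_min (by positivity) (by positivity), by
      have := min_le_left (ε * (M * ξ) / 4) (ε / 4); linarith, by
      have := min_le_right (ε * (M * ξ) / 4) (ε / 4); linarith⟩
  let σ : F → ℝ := fun p => c / (1 + ‖p‖) ^ 2
  have hσ0 : ∀ p, 0 < σ p := fun p => by
    have := norm_nonneg p
    simp only [σ]; positivity
  have hσc : ∀ p, σ p ≤ c := fun p => by
    have := norm_nonneg p
    simp only [σ]
    exact div_le_self hc.le (one_le_pow₀ (by linarith))
  let R : E → F → Prop := fun x z =>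
    (x ∈ A ∧ z = T x) ∨
    ∃ a ∈ A, ‖x - a‖ ≤ ξ ∧ (x ∈ A → a = x) ∧ ‖z - auxRho ε (T a)‖ ≤ σ (T a)
  have hR1 : ∀ x, #E ≤ #{z | R x z} := by
    intro x
    obtain ⟨a, haA, ha, hax⟩ : ∃ a ∈ A, ‖x - a‖ ≤ ξ ∧ (x ∈ A → a = x) := by
      by_cases hx : x ∈ A
      · exact ⟨x, hx, by simpa using hξ.le, fun _ => rfl⟩
      · obtain ⟨a, h1, h2⟩ := hA x
        exact ⟨a, h1, h2, fun h => absurd h hx⟩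
    have hmem : {z | R x z} ∈ nhds (auxRho ε (T a)) := by
      refine Filter.mem_of_superset (Metric.ball_mem_nhds _ (hσ0 (T a))) (fun z hz => ?_)
      rw [Metric.mem_ball, dist_eq_norm] at hz
      exact Or.inr ⟨a, haA, ha, hax, hz.le⟩
    rw [cardinal_eq_of_mem_nhds ℝ hmem, hcard]
  obtain ⟨i, hi, hiR⟩ := aux_inj R hR1
  choose j hjA hj using hsurj
  have hjinj : Function.Injective j := fun z w h => by rw [← hj z, ← hj w, h]
  obtain ⟨T', hbij, hT'⟩ := Function.Embedding.schroeder_bernstein_of_rel hi hjinj R hiR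
    (fun z => Or.inl ⟨hjA z, (hj z).symm⟩)
  -- common consequence
  have hcom : ∀ x, ∃ a ∈ A, ‖x - a‖ ≤ ξ ∧ (x ∈ A → a = x) ∧ ‖T' x - T a‖ ≤ 2 * ε := by
    intro x
    rcases hT' x with ⟨hx, h⟩ | ⟨a, haA, hxa, hax, hza⟩
    · exact ⟨x, hx, by simpa using hξ.le, fun _ => rfl, by rw [h]; simpa using hε.le⟩
    · refine ⟨a, haA, hxa, hax, ?_⟩
      have h1 := norm_sub_le_norm_sub_add_norm_sub (T' x) (auxRho ε (T a)) (T a)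
      have h2 := auxRho_sub ε hε.le (T a)
      have h3 := hσc (T a)
      linarith
  -- mixed upper bound
  have hmix : ∀ x y, y ∈ A → T' y = T y → ‖T' x - T' y‖ ≤ M * ‖x - y‖ + 2 * M * ξ := by
    intro x y hy hTy
    obtain ⟨a, haA, hxa, -, hza⟩ := hcom x
    rw [hTy]
    have h1 := norm_sub_le_norm_sub_add_norm_sub (T' x) (T a) (T y)
    have h2 := hTup a haA y hy
    have h3 := norm_sub_le_norm_sub_add_norm_sub a x y
    rw [norm_sub_rev a x] at h3
    have h4 : M * ‖a - y‖ ≤ M * (ξ + ‖x - y‖) := by gcongr; linarith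
    linarith
  refine ⟨T', hbij, ?_, ?_, ?_⟩
  · intro x y
    obtain ⟨a, haA, hxa, -, hza⟩ := hcom x
    obtain ⟨b, hbA, hyb, -, hzb⟩ := hcom y
    have h1 := (aux_near x y a b ξ hxa hyb).2
    have h2 := (aux_near2 _ _ _ _ _ _ hza hzb).2
    have h3 := hTlow a haA b hbA
    have h4 : 1 / M * ‖x - y‖ ≤ 1 / M * (‖a - b‖ + 2 * ξ) := by gcongr
    linarith
  · intro x y
    rcases hT' x with ⟨hx, h⟩ | ⟨a, haA, hxa, -, hza⟩
    · rw [norm_sub_rev, norm_sub_rev x y]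
      exact hmix y x hx h
    rcases hT' y with ⟨hy, h⟩ | ⟨b, hbA, hyb, -, hzb⟩
    · exact hmix x y hy h
    rcases le_total (M * ξ) ‖T a - T b‖ with hd | hd
    · have h1 := (aux_near x y a b ξ hxa hyb).1
      have h2 := (aux_near2 _ _ _ _ _ _ hza hzb).1
      have h3 := hTup a haA b hbA
      have h4 : M * ‖a - b‖ ≤ M * (‖x - y‖ + 2 * ξ) := by gcongr
      have h5 : ‖auxRho ε (T a) - auxRho ε (T b)‖ + σ (T a) + σ (T b) ≤ ‖T a - T b‖ :=
        auxRho_contract ε c (M * ξ) hε hε1 hc.le hc1 hc2 (T a) (T b) hd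
      linarith
    · have h2 := (aux_near2 _ _ _ _ _ _ hza hzb).1
      have h5 := (aux_near2 _ _ _ _ _ _ (auxRho_sub ε hε.le (T a)) (auxRho_sub ε hε.le (T b))).1
      have h6 := hσc (T a)
      have h7 := hσc (T b)
      have h8 : 0 ≤ M * ‖x - y‖ := by positivity
      have h9 : 2 * ε + 2 * c ≤ M * ξ := by
        linarith
      linarith
  · intro x hx
    obtain ⟨a, haA, hxa, hax, hza⟩ := hcom x
    rw [hax hx] at hza
    linarith


/-- Extension of a coarse `(M,L)`-quasi isometry between dense subsets of
infinite-dimensional Banach spaces to a bijective coarse quasi isometry of the whole spaces. -/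
theorem stmt_3 {E F : Type} [NormedAddCommGroup E] [NormedSpace ℝ E] [CompleteSpace E]
    [NormedAddCommGroup F] [NormedSpace ℝ F] [CompleteSpace F]
    (hE : ¬ FiniteDimensional ℝ E) (hF : ¬ FiniteDimensional ℝ F)
    (M L ξE ξF : ℝ) (hM : 0 < M) (hL : 0 ≤ L) (hξE : 0 ≤ ξE) (hξF : 0 ≤ ξF)
    (A : Set E) (hA : ∀ x : E, ∃ a ∈ A, ‖x - a‖ ≤ ξE)
    (T : E → F)
    (hTlow : ∀ x ∈ A, ∀ y ∈ A, (1 / M) * ‖x - y‖ - L ≤ ‖T x - T y‖)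
    (hTup : ∀ x ∈ A, ∀ y ∈ A, ‖T x - T y‖ ≤ M * ‖x - y‖ + L)
    (hTdense : ∀ z : F, ∃ a ∈ A, ‖z - T a‖ ≤ ξF) :
    ∃ T' : E → F, Function.Bijective T' ∧
      (∀ x y : E, (1 / M) * ‖x - y‖ - ((4 * M ^ 2 + 3) * L + 4 * ξF + 2 * M * ξE) ≤
        ‖T' x - T' y‖) ∧
      (∀ x y : E, ‖T' x - T' y‖ ≤ M * ‖x - y‖ + ((4 * M ^ 2 + 3) * L + 4 * ξF + 2 * M * ξE)) ∧
      ∀ x ∈ A, ‖T' x - T x‖ ≤ (2 * M ^ 2 + 2) * L + 2 * ξF + M * ξE := by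
  have hntE : Nontrivial E := by
    by_contra h
    rw [not_nontrivial_iff_subsingleton] at h
    exact hE inferInstance
  have hM1 : 1 ≤ M := aux_one_le M L ξE hM A hA T hTlow hTup
  have hcard := aux_card hE hF M L ξE ξF hM A hA T hTlow hTdense
  by_cases hpos : 0 < L + ξF
  · exact aux_case_pos hcard M L ξE ξF hM1 hL hξE hξF hpos A hA T hTlow hTup hTdense
  have hL0 : L = 0 := by linarith
  have hF0 : ξF = 0 := by linarith
  subst hL0 hF0
  simp only [sub_zero, add_zero, mul_zero, zero_add] at *
  have hsurj : ∀ z : F, ∃ a ∈ A, T a = z := by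
    intro z
    obtain ⟨a, ha, h⟩ := hTdense z
    exact ⟨a, ha, (sub_eq_zero.1 (norm_le_zero_iff.1 h)).symm⟩
  have hinj : ∀ x ∈ A, ∀ y ∈ A, T x = T y → x = y := by
    intro x hx y hy h
    have := hTlow x hx y hy
    rw [h, sub_self, norm_zero, one_div, inv_mul_le_iff₀ hM, mul_zero] at this
    exact sub_eq_zero.1 (norm_le_zero_iff.1 this)
  have hMξ : 0 ≤ M * ξE := by positivity
  have htriv : (∀ x, x ∈ A) → ∃ T' : E → F, Function.Bijective T' ∧
      (∀ x y : E, (1 / M) * ‖x - y‖ - 2 * M * ξE ≤ ‖T' x - T' y‖) ∧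
      (∀ x y : E, ‖T' x - T' y‖ ≤ M * ‖x - y‖ + 2 * M * ξE) ∧
      ∀ x ∈ A, ‖T' x - T x‖ ≤ M * ξE := by
    intro hall
    refine ⟨T, ⟨fun x y h => hinj x (hall x) y (hall y) h, fun z => ?_⟩, ?_, ?_, ?_⟩
    · obtain ⟨a, _, h⟩ := hsurj z
      exact ⟨a, h⟩
    · intro x y
      have := hTlow x (hall x) y (hall y)
      linarith
    · intro x y
      have := hTup x (hall x) y (hall y)
      linarith
    · intro x _
      simpa using hMξ
  rcases hξE.eq_or_lt with h0 | h0
  · apply htriv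
    intro x
    obtain ⟨a, ha, h⟩ := hA x
    rw [← h0] at h
    rw [sub_eq_zero.1 (norm_le_zero_iff.1 h)]
    exact ha
  rcases hM1.eq_or_lt with h1 | h1
  · apply htriv
    subst h1
    choose S hSA hS using hsurj
    have hiso : ∀ p q, ‖S p - S q‖ = ‖p - q‖ := by
      intro p q
      have a1 := hTlow _ (hSA p) _ (hSA q)
      have a2 := hTup _ (hSA p) _ (hSA q)
      rw [hS, hS] at a1 a2
      linarith
    have honto := aux_onto S hiso ξE (fun x => by
      obtain ⟨a, ha, h⟩ := hA x
      refine ⟨T a, ?_⟩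
      rwa [hinj _ (hSA (T a)) a ha (hS _)])
    intro x
    obtain ⟨p, rfl⟩ := honto x
    exact hSA p
  · exact aux_case_zero hcard M ξE h1 h0 A hA T hTlow hTup hsurj
end

section
/- Assume the coarse Banach-Stone setup with 1 − ε(M)M − ε(M) > 0, and let φ : X → Y be the map defined by {φ(x)} = S^D_m(x) for m > Mm₁ + L (well-defined and single-valued by the uniqueness fact), with inverse ψ : Y → X defined symmetrically. Then there exists m₂ ≥ 0 (m₂ = 0 when L = 0) such that for every f ∈ C(X) with ‖f‖ ≥ m₂ and every x ∈ X: |f(x)| − ε(M)M‖f‖ − (ε(M)+1)L ≤ |Tf(φ(x))| ≤ |f(x)| + ε(M)‖f‖ + L. -/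
open Filter Topology

/-- A bundled nonempty directed index set (for Moore–Smith nets). -/
structure DirIndex : Type 1 where
  ι : Type
  [pre : Preorder ι]
  [dir : IsDirected ι (· ≤ ·)]
  [ne : Nonempty ι]

attribute [instance] DirIndex.pre DirIndex.dir DirIndex.ne

/-- `f` is an `m`-peak net at `x`: `‖f σ‖ = |f σ x| = m` for all `σ`, and `f σ → 0`
uniformly on the complement of every open neighborhood of `x`. -/
def IsPeakNet {X : Type} [TopologicalSpace X] [CompactSpace X] (I : DirIndex)
    (f : I.ι → C(X, ℝ)) (m : ℝ) (x : X) : Prop :=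
  (∀ σ, ‖f σ‖ = m ∧ |f σ x| = m) ∧
  ∀ U : Set X, IsOpen U → x ∈ U →
    TendstoUniformlyOn (fun σ => ⇑(f σ)) 0 atTop Uᶜ

/-- The set `S^D_m(x) ⊆ Y`: limits `y` of nets `y_σ` such that some `m`-peak net `f_σ` at `x`
satisfies `T f_σ (y_σ) ≥ D m` and `T (-f_σ) (y_σ) ≤ -D m`. -/
def SD {X Y : Type} [TopologicalSpace X] [CompactSpace X] [TopologicalSpace Y]
    (T : C(X, ℝ) → C(Y, ℝ)) (D m : ℝ) (x : X) : Set Y :=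
  { y | ∃ (I : DirIndex) (f : I.ι → C(X, ℝ)) (yσ : I.ι → Y),
      IsPeakNet I f m x ∧ Tendsto yσ atTop (𝓝 y) ∧
      ∀ σ, D * m ≤ T (f σ) (yσ σ) ∧ T (-(f σ)) (yσ σ) ≤ -(D * m) }

theorem aux_norm_le {X : Type} [TopologicalSpace X] [CompactSpace X]
    (f g : C(X, ℝ)) (m δ : ℝ) (x : X) (hδ : 0 < δ) (hf : ‖f‖ ≤ m) (hg : ‖g‖ ≤ m)
    (h : ∀ z, z ∉ {z | |f z - f x| < δ} → |g z| < δ) :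
    ‖g - f‖ ≤ m + |f x| + δ := by
  have hm : 0 ≤ m := (norm_nonneg f).trans hf
  have hx := abs_nonneg (f x)
  rw [ContinuousMap.norm_le _ (by linarith)]
  intro z
  have hfz : |f z| ≤ m := (f.norm_coe_le_norm z).trans hf
  have hgz : |g z| ≤ m := (g.norm_coe_le_norm z).trans hg
  have h1 : ‖(g - f) z‖ ≤ |g z| + |f z| := by
    simpa using abs_sub (g z) (f z)
  by_cases hz : |f z - f x| < δ
  · have : |f z| - |f x| ≤ |f z - f x| := abs_sub_abs_le_abs_sub _ _
    linarith
  · have := h z hz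
    linarith

theorem one_sided {X Y : Type} [TopologicalSpace X] [CompactSpace X]
    [TopologicalSpace Y] [CompactSpace Y]
    (M L D : ℝ) (hM1 : 1 ≤ M) (T : C(X, ℝ) → C(Y, ℝ))
    (hTup : ∀ f g : C(X, ℝ), ‖T f - T g‖ ≤ M * ‖f - g‖ + L)
    (m : ℝ) (x : X) (y : Y) (hy : y ∈ SD T D m x) (f : C(X, ℝ)) (hf : ‖f‖ ≤ m) :
    |T f y| ≤ |f x| + (2 * M - 1 - D) * m + L := by
  obtain ⟨I, F, yσ, ⟨hF, hU⟩, hlim, hT⟩ := hy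
  have hM0 : 0 < M := by linarith
  refine le_of_forall_pos_le_add fun e he => ?_
  set δ := e / M with hδ
  have hδ0 : 0 < δ := by positivity
  have hMδ : M * δ = e := by rw [hδ]; field_simp
  have hop : IsOpen {z | |f z - f x| < δ} := isOpen_lt (by fun_prop) continuous_const
  have hev := Metric.tendstoUniformlyOn_iff.1 (hU _ hop (by simpa using hδ0)) δ hδ0
  have hfx : |f x| ≤ m := (f.norm_coe_le_norm x).trans hf
  have hMf : M * |f x| ≤ |f x| + (M - 1) * m := by nlinarith
  have key : ∀ᶠ σ in atTop, |T f (yσ σ)| ≤ |f x| + (2 * M - 1 - D) * m + L + e := by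
    filter_upwards [hev] with σ hσ
    have h1 : ∀ z, z ∉ {z | |f z - f x| < δ} → |F σ z| < δ := by
      intro z hz
      simpa [Real.dist_eq] using hσ z hz
    have a1 := aux_norm_le f (F σ) m δ x hδ0 hf (hF σ).1.le h1
    have a2 := aux_norm_le f (-(F σ)) m δ x hδ0 hf (by rw [norm_neg]; exact (hF σ).1.le)
      (by simpa using h1)
    have b1 := (hTup (F σ) f).trans
      (add_le_add_left (mul_le_mul_of_nonneg_left a1 hM0.le) L)
    have b2 := (hTup (-(F σ)) f).trans
      (add_le_add_left (mul_le_mul_of_nonneg_left a2 hM0.le) L)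
    have c1 := abs_le.1 (((T (F σ) - T f).norm_coe_le_norm (yσ σ)).trans b1)
    have c2 := abs_le.1 (((T (-(F σ)) - T f).norm_coe_le_norm (yσ σ)).trans b2)
    simp only [ContinuousMap.sub_apply] at c1 c2
    obtain ⟨d1, d2⟩ := hT σ
    rw [abs_le]
    constructor <;> nlinarith
  have hl : Tendsto (fun σ => |T f (yσ σ)|) atTop (𝓝 |T f y|) :=
    (((T f).continuous.abs).tendsto y).comp hlim
  exact le_of_tendsto hl key

theorem SD_nonempty {X Y : Type} [TopologicalSpace X] [CompactSpace X] [T2Space X]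
    [TopologicalSpace Y] [CompactSpace Y]
    (M D : ℝ) (hM1 : 1 ≤ M) (hD : D < 2 / M - M)
    (T : C(X, ℝ) → C(Y, ℝ)) (h0 : T 0 = 0)
    (hTlow : ∀ f g : C(X, ℝ), (1 / M) * ‖f - g‖ ≤ ‖T f - T g‖)
    (hTup : ∀ f g : C(X, ℝ), ‖T f - T g‖ ≤ M * ‖f - g‖)
    (m : ℝ) (hm : 0 < m) (x : X) : (SD T D m x).Nonempty := by
  have hM0 : 0 < M := by linarith
  have step : ∀ U : TopologicalSpace.OpenNhdsOf x, ∃ (f : C(X, ℝ)) (y : Y), ‖f‖ = m ∧ |f x| = m ∧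
      (∀ z, z ∉ (U : Set X) → f z = 0) ∧ D * m ≤ T f y ∧ T (-f) y ≤ -(D * m) := by
    intro U
    obtain ⟨u, hu0, hu1, hu⟩ := exists_continuous_zero_one_of_isClosed
      (s := (U : Set X)ᶜ) (t := {x}) U.isOpen.isClosed_compl isClosed_singleton
      (by rw [Set.disjoint_singleton_right]; simpa using U.mem)
    have hux : u x = 1 := hu1 rfl
    set g : C(X, ℝ) := m • u with hg
    have hgx : |g x| = m := by simp [hg, hux, abs_of_pos hm]
    have hgn : ‖g‖ = m := by
      apply le_antisymm
      · rw [ContinuousMap.norm_le _ hm.le]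
        intro z
        have := hu z
        simp only [hg, ContinuousMap.smul_apply, smul_eq_mul, Real.norm_eq_abs]
        rw [abs_of_nonneg (mul_nonneg hm.le this.1)]
        nlinarith [this.2]
      · rw [← hgx]; exact g.norm_coe_le_norm x
    have hgz : ∀ z, z ∉ (U : Set X) → g z = 0 := by
      intro z hz
      have : u z = 0 := hu0 hz
      simp [hg, this]
    have h2 : ‖g - -g‖ = 2 * m := by
      rw [sub_neg_eq_add, ← two_smul ℝ g, norm_smul, hgn]; simp
    have hlow := hTlow g (-g)
    rw [h2] at hlow
    have hex : ∃ y, 1 / M * (2 * m) ≤ |T g y - T (-g) y| := by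
      by_contra hcon
      push Not at hcon
      have := (ContinuousMap.norm_lt_iff (T g - T (-g))
        (show 0 < 1 / M * (2 * m) by positivity)).2
        (fun y => by simpa using hcon y)
      linarith
    obtain ⟨y, hy⟩ := hex
    have b : ∀ k : C(X, ℝ), ‖k‖ = m → |T k y| ≤ M * m := by
      intro k hk
      have h3 := hTup k 0
      rw [h0, sub_zero, sub_zero, hk] at h3
      exact ((T k).norm_coe_le_norm y).trans h3
    have b1 := abs_le.1 (b g hgn)
    have b2 := abs_le.1 (b (-g) (by rw [norm_neg, hgn]))
    have hDm : D * m ≤ 1 / M * (2 * m) - M * m := by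
      have := mul_le_mul_of_nonneg_right hD.le hm.le
      calc D * m ≤ _ := this
        _ = _ := by ring
    rcases le_abs'.1 hy with h | h
    · refine ⟨-g, y, by rw [norm_neg, hgn], by simpa using hgx, fun z hz => by simp [hgz z hz],
        by linarith, by rw [neg_neg]; linarith⟩
    · exact ⟨g, y, hgn, hgx, hgz, by linarith, by linarith⟩
  choose f y h1 h2 h3 h4 h5 using step
  haveI : (atTop : Filter (TopologicalSpace.OpenNhdsOf x)ᵒᵈ).NeBot := atTop_neBot
  obtain ⟨y0, hy0⟩ := exists_clusterPt_of_compactSpace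
    (map (fun U : (TopologicalSpace.OpenNhdsOf x)ᵒᵈ => y (OrderDual.ofDual U)) atTop)
  have hsub : ∀ p : TopologicalSpace.OpenNhdsOf x × TopologicalSpace.OpenNhdsOf y0, ∃ U : TopologicalSpace.OpenNhdsOf x, U ≤ p.1 ∧
      y U ∈ (p.2 : Set Y) := by
    intro p
    have hfr := MapClusterPt.frequently hy0 (p := fun z => z ∈ (p.2 : Set Y))
      (p.2.isOpen.mem_nhds p.2.mem)
    obtain ⟨U, hU, hU2⟩ := (hfr.and_eventually (eventually_ge_atTop (OrderDual.toDual p.1))).exists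
    exact ⟨OrderDual.ofDual U, hU2, hU⟩
  choose s hs1 hs2 using hsub
  refine ⟨y0, ⟨(TopologicalSpace.OpenNhdsOf x × TopologicalSpace.OpenNhdsOf y0)ᵒᵈ⟩, fun p => f (s (OrderDual.ofDual p)),
    fun p => y (s (OrderDual.ofDual p)), ⟨fun σ => ⟨h1 _, h2 _⟩, ?_⟩, ?_, fun σ => ⟨h4 _, h5 _⟩⟩
  · intro U hU hxU
    rw [Metric.tendstoUniformlyOn_iff]
    intro e he
    filter_upwards [eventually_ge_atTop (OrderDual.toDual
      ((⟨⟨U, hU⟩, hxU⟩, ⊤) : TopologicalSpace.OpenNhdsOf x × TopologicalSpace.OpenNhdsOf y0))] with p hp z hz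
    have hp1 : (OrderDual.ofDual p).1 ≤ ⟨⟨U, hU⟩, hxU⟩ := hp.1
    have hle := (hs1 (OrderDual.ofDual p)).trans hp1
    have : z ∉ (s (OrderDual.ofDual p) : Set X) := fun hzz => hz (hle hzz)
    simpa [h3 _ z this] using he
  · rw [tendsto_nhds]
    intro W hW hyW
    filter_upwards [eventually_ge_atTop (OrderDual.toDual
      ((⊤, ⟨⟨W, hW⟩, hyW⟩) : TopologicalSpace.OpenNhdsOf x × TopologicalSpace.OpenNhdsOf y0))] with p hp
    have hp1 : (OrderDual.ofDual p).2 ≤ ⟨⟨W, hW⟩, hyW⟩ := hp.2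
    exact hp1 (hs2 (OrderDual.ofDual p))

/-- One step of the chain (case `L = 0`). -/
theorem SD_step {X Y : Type} [TopologicalSpace X] [CompactSpace X] [T2Space X]
    [TopologicalSpace Y] [CompactSpace Y] [T2Space Y]
    (M D K : ℝ) (hM1 : 1 ≤ M) (hD : D < 2 / M - M) (hK : M ≤ K)
    (hKε : 0 < 1 - (2 * M - 1 - D) * K - (2 * M - 1 - D))
    (T : C(X, ℝ) → C(Y, ℝ)) (T' : C(Y, ℝ) → C(X, ℝ))
    (h0 : T 0 = 0) (h0' : T' 0 = 0) (hinv₁ : Function.LeftInverse T' T)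
    (hTup : ∀ f g : C(X, ℝ), ‖T f - T g‖ ≤ M * ‖f - g‖)
    (hT'low : ∀ f g : C(Y, ℝ), (1 / M) * ‖f - g‖ ≤ ‖T' f - T' g‖)
    (hT'up : ∀ f g : C(Y, ℝ), ‖T' f - T' g‖ ≤ M * ‖f - g‖)
    (m : ℝ) (hm : 0 < m) (x : X) (y : Y) (hy : y ∈ SD T D m x) : x ∈ SD T' D (K * m) y := by
  have hK0 : 0 < K := by linarith
  obtain ⟨x', hx'⟩ := SD_nonempty M D hM1 hD T' h0' hT'low hT'up (K * m) (by positivity) y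
  by_cases hxx : x' = x
  · rwa [hxx] at hx'
  exfalso
  obtain ⟨u, hu0, hu1, hu⟩ := exists_continuous_zero_one_of_isClosed
    (s := {x}) (t := {x'}) isClosed_singleton isClosed_singleton
    (by simpa using fun h : x = x' => hxx h.symm)
  have hux : u x = 0 := hu0 rfl
  have hux' : u x' = 1 := hu1 rfl
  have hn : ‖m • u‖ ≤ m := by
    rw [ContinuousMap.norm_le _ hm.le]
    intro z
    have := hu z
    simp only [ContinuousMap.smul_apply, smul_eq_mul, Real.norm_eq_abs]
    rw [abs_of_nonneg (mul_nonneg hm.le this.1)]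
    nlinarith [this.2]
  have e1 := one_sided M 0 D hM1 T (by simpa using hTup) m x y hy (m • u) hn
  have hTn : ‖T (m • u)‖ ≤ K * m := by
    have := hTup (m • u) 0
    rw [h0, sub_zero, sub_zero] at this
    nlinarith [norm_nonneg (m • u)]
  have e2 := one_sided M 0 D hM1 T' (by simpa using hT'up) (K * m) y x' hx' (T (m • u)) hTn
  rw [hinv₁] at e2
  simp only [ContinuousMap.smul_apply, hux, hux', smul_eq_mul, mul_zero, mul_one, abs_zero,
    abs_of_pos hm] at e1 e2
  nlinarith [mul_pos hKε hm]

/-- For `L = 0`, the large-scale point `φ x` lies in every `SD T D m x`. -/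
theorem SD_mem {X Y : Type} [TopologicalSpace X] [CompactSpace X] [T2Space X]
    [TopologicalSpace Y] [CompactSpace Y] [T2Space Y]
    (M D : ℝ) (hM1 : 1 ≤ M) (hD : D < 2 / M - M)
    (hε : 0 < 1 - (2 * M - 1 - D) * M - (2 * M - 1 - D))
    (T : C(X, ℝ) → C(Y, ℝ)) (T' : C(Y, ℝ) → C(X, ℝ))
    (h0 : T 0 = 0) (h0' : T' 0 = 0) (hinv₁ : Function.LeftInverse T' T)
    (hinv₂ : Function.RightInverse T' T)
    (hTlow : ∀ f g : C(X, ℝ), (1 / M) * ‖f - g‖ ≤ ‖T f - T g‖)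
    (hTup : ∀ f g : C(X, ℝ), ‖T f - T g‖ ≤ M * ‖f - g‖)
    (hT'low : ∀ f g : C(Y, ℝ), (1 / M) * ‖f - g‖ ≤ ‖T' f - T' g‖)
    (hT'up : ∀ f g : C(Y, ℝ), ‖T' f - T' g‖ ≤ M * ‖f - g‖)
    (R : ℝ) (φ : X → Y) (hφ : ∀ m : ℝ, R < m → ∀ x : X, SD T D m x = {φ x})
    (m : ℝ) (hm : 0 < m) (x : X) : φ x ∈ SD T D m x := by
  obtain ⟨K, hK, hKε⟩ : ∃ K, M < K ∧ 0 < 1 - (2 * M - 1 - D) * K - (2 * M - 1 - D) := by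
    have hc : ContinuousAt (fun K : ℝ => 1 - (2 * M - 1 - D) * K - (2 * M - 1 - D)) M := by
      fun_prop
    have h1 : ∀ᶠ K in 𝓝[>] M, 0 < 1 - (2 * M - 1 - D) * K - (2 * M - 1 - D) :=
      (hc.eventually (lt_mem_nhds hε)).filter_mono nhdsWithin_le_nhds
    obtain ⟨K, hK, hK2⟩ := (h1.and self_mem_nhdsWithin).exists
    exact ⟨K, hK2, hK⟩
  have hK0 : 0 < K := by linarith
  obtain ⟨y, hy⟩ := SD_nonempty M D hM1 hD T h0 hTlow hTup m hm x
  have chain : ∀ n : ℕ, y ∈ SD T D ((K * K) ^ n * m) x := by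
    intro n
    induction n with
    | zero => simpa using hy
    | succ n ih =>
      have a := SD_step M D K hM1 hD hK.le hKε T T' h0 h0' hinv₁ hTup hT'low hT'up _
        (by positivity) x y ih
      have b := SD_step M D K hM1 hD hK.le hKε T' T h0' h0 hinv₂ hT'up hTlow hTup _
        (by positivity) y x a
      have e : K * (K * ((K * K) ^ n * m)) = (K * K) ^ (n + 1) * m := by ring
      rwa [e] at b
  obtain ⟨n, hn⟩ := pow_unbounded_of_one_lt (R / m) (show 1 < K * K by nlinarith)
  have hlarge : R < (K * K) ^ n * m := by rwa [div_lt_iff₀ hm] at hn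
  have := chain n
  rw [hφ _ hlarge] at this
  rw [← (this : y = φ x)]
  exact hy

/-- The two-sided estimate for `|Tf(φ(x))|`, where `ε(M) = 2M - 1 - D`. -/
theorem stmt_10 {X Y : Type} [TopologicalSpace X] [CompactSpace X] [T2Space X]
    [TopologicalSpace Y] [CompactSpace Y] [T2Space Y]
    (M L D : ℝ) (hM1 : 1 ≤ M) (hM2 : M < Real.sqrt 2) (hL : 0 ≤ L)
    (hD0 : 0 < D) (hD : D < 2 / M - M)
    (T : C(X, ℝ) → C(Y, ℝ)) (T' : C(Y, ℝ) → C(X, ℝ))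
    (hbij : Function.Bijective T) (h0 : T 0 = 0)
    (hinv₁ : Function.LeftInverse T' T) (hinv₂ : Function.RightInverse T' T)
    (hTlow : ∀ f g : C(X, ℝ), (1 / M) * ‖f - g‖ - L ≤ ‖T f - T g‖)
    (hTup : ∀ f g : C(X, ℝ), ‖T f - T g‖ ≤ M * ‖f - g‖ + L)
    (hT'low : ∀ f g : C(Y, ℝ), (1 / M) * ‖f - g‖ - L ≤ ‖T' f - T' g‖)
    (hT'up : ∀ f g : C(Y, ℝ), ‖T' f - T' g‖ ≤ M * ‖f - g‖ + L)
    (hε : 0 < 1 - (2 * M - 1 - D) * M - (2 * M - 1 - D))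
    (m₁ : ℝ) (hm₁ : 0 ≤ m₁)
    (φ : X → Y) (ψ : Y → X)
    (hφ : ∀ m : ℝ, M * m₁ + L < m → ∀ x : X, SD T D m x = {φ x})
    (hψ : ∀ m : ℝ, M * m₁ + L < m → ∀ y : Y, SD T' D m y = {ψ y})
    (hφψ : Function.LeftInverse ψ φ) (hψφ : Function.RightInverse ψ φ) :
    ∃ m₂ : ℝ, 0 ≤ m₂ ∧ (L = 0 → m₂ = 0) ∧
      ∀ f : C(X, ℝ), m₂ ≤ ‖f‖ → ∀ x : X,
        |f x| - (2 * M - 1 - D) * M * ‖f‖ - ((2 * M - 1 - D) + 1) * L ≤ |T f (φ x)| ∧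
        |T f (φ x)| ≤ |f x| + (2 * M - 1 - D) * ‖f‖ + L := by
  have hM0 : 0 < M := by linarith
  have h0' : T' 0 = 0 := by rw [← h0]; exact hinv₁ 0
  have main : ∀ (f : C(X, ℝ)) (x : X), φ x ∈ SD T D ‖f‖ x →
      ψ (φ x) ∈ SD T' D (M * ‖f‖ + L) (φ x) →
      |f x| - (2 * M - 1 - D) * M * ‖f‖ - ((2 * M - 1 - D) + 1) * L ≤ |T f (φ x)| ∧
        |T f (φ x)| ≤ |f x| + (2 * M - 1 - D) * ‖f‖ + L := by
    intro f x h1 h2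
    rw [hφψ x] at h2
    have hn : ‖T f‖ ≤ M * ‖f‖ + L := by simpa [h0] using hTup f 0
    have e1 := one_sided M L D hM1 T hTup _ x (φ x) h1 f le_rfl
    have e2 := one_sided M L D hM1 T' hT'up _ (φ x) x h2 (T f) hn
    rw [hinv₁] at e2
    exact ⟨by linarith, e1⟩
  rcases eq_or_lt_of_le hL with hL0 | hLpos
  · subst hL0
    refine ⟨0, le_rfl, fun _ => rfl, fun f _ x => ?_⟩
    rcases eq_or_ne f 0 with rfl | hf
    · simp [h0]
    have hfn : 0 < ‖f‖ := norm_pos_iff.2 hf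
    simp only [add_zero, sub_zero] at hTlow hTup hT'low hT'up hφ hψ
    apply main f x
    · exact SD_mem M D hM1 hD hε T T' h0 h0' hinv₁ hinv₂ hTlow hTup hT'low hT'up _ φ hφ _ hfn x
    · exact SD_mem M D hM1 hD hε T' T h0' h0 hinv₂ hinv₁ hT'low hT'up hTlow hTup _ ψ hψ _
        (by positivity) (φ x)
  · refine ⟨M * m₁ + L + 1, by positivity, fun h => absurd h hLpos.ne', fun f hf x => ?_⟩
    apply main f x
    · rw [hφ _ (by linarith)]; rfl
    · rw [hψ _ (by nlinarith [norm_nonneg f])]; rfl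
end

section
/- If X and Y are compact Hausdorff spaces with d_N(C(X), C(Y)) < 6/5, then X and Y are homeomorphic. -/
/-- `N` is an `(ε, δ)`-net in the metric space `E`: it is `ε`-dense and `δ`-separated. -/
def IsNetIn {E : Type} [MetricSpace E] (N : Set E) (ε δ : ℝ) : Prop :=
  (∀ x : E, ∃ n ∈ N, dist x n ≤ ε) ∧ ∀ a ∈ N, ∀ b ∈ N, a ≠ b → δ ≤ dist a b

/-- The set of products `l(T) * l(T⁻¹)` over bi-Lipschitz bijections `T` between nets of `E`
and `F`. -/
def netDistSet (E F : Type) [MetricSpace E] [MetricSpace F] : Set ℝ :=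
  { c | ∃ (NE : Set E) (NF : Set F) (ε₁ δ₁ ε₂ δ₂ : ℝ), 0 < ε₁ ∧ 0 < δ₁ ∧ 0 < ε₂ ∧ 0 < δ₂ ∧
      IsNetIn NE ε₁ δ₁ ∧ IsNetIn NF ε₂ δ₂ ∧
      ∃ (T : NE → NF) (K K' : ℝ), Function.Bijective T ∧ 0 < K ∧ 0 < K' ∧
        (∀ a b : NE, dist (T a : F) (T b : F) ≤ K * dist (a : E) (b : E)) ∧
        (∀ a b : NE, dist (a : E) (b : E) ≤ K' * dist (T a : F) (T b : F)) ∧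
        c = K * K' }

/-- The net distance between Banach spaces `E` and `F`. -/
noncomputable def netDist (E F : Type) [MetricSpace E] [MetricSpace F] : ℝ :=
  sInf (netDistSet E F)

section NetDistHelpers

set_option linter.unusedSectionVars false

variable {X Y : Type} [TopologicalSpace X] [CompactSpace X] [T2Space X]
    [TopologicalSpace Y] [CompactSpace Y] [T2Space Y]

/-- Points `y` at which `U` separates all functions peaking at `x` from those dipping at `x`. -/
def peakSet (U : C(X, ℝ) → C(Y, ℝ)) (r c : ℝ) (x : X) : Set Y :=
  {y | ∀ f g : C(X, ℝ), ‖f‖ ≤ r → ‖g‖ ≤ r → r - 1 < f x → g x < -r + 1 → c ≤ |U f y - U g y|}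

/-- `(U, V)` is a coarse quasi-inverse pair. -/
structure CoarsePair (U : C(X, ℝ) → C(Y, ℝ)) (V : C(Y, ℝ) → C(X, ℝ)) (K K' L : ℝ) : Prop where
  kpos : 0 < K
  kpos' : 0 < K'
  lpos : 0 < L
  hU : ∀ f g, dist (U f) (U g) ≤ K * dist f g + L
  hV : ∀ f g, dist (V f) (V g) ≤ K' * dist f g + L
  hVU : ∀ f, dist (V (U f)) f ≤ L
  hUV : ∀ f, dist (U (V f)) f ≤ L
  hU0 : ∀ f, ‖U f‖ ≤ K * ‖f‖ + L
  hV0 : ∀ f, ‖V f‖ ≤ K' * ‖f‖ + L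

theorem CoarsePair.swap {U : C(X, ℝ) → C(Y, ℝ)} {V : C(Y, ℝ) → C(X, ℝ)} {K K' L : ℝ}
    (h : CoarsePair U V K K' L) : CoarsePair V U K' K L :=
  ⟨h.kpos', h.kpos, h.lpos, h.hV, h.hU, h.hUV, h.hVU, h.hV0, h.hU0⟩

theorem abs_sub_le_dist (f g : C(X, ℝ)) (x : X) : |f x - g x| ≤ dist f g := by
  rw [← Real.dist_eq]; exact ContinuousMap.dist_apply_le_dist x

theorem abs_le_of_norm {f : C(X, ℝ)} {r : ℝ} (h : ‖f‖ ≤ r) (x : X) : -r ≤ f x ∧ f x ≤ r := by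
  have := f.norm_coe_le_norm x
  rw [Real.norm_eq_abs] at this
  exact abs_le.1 (this.trans h)

theorem exists_dist_attained [Nonempty Y] (f g : C(Y, ℝ)) : ∃ y, dist f g ≤ |f y - g y| := by
  obtain ⟨y, -, hy⟩ := isCompact_univ.exists_isMaxOn (Set.univ_nonempty (α := Y))
    (f := fun y => |f y - g y|) (by fun_prop)
  refine ⟨y, ?_⟩
  rw [ContinuousMap.dist_le (abs_nonneg _)]
  intro z
  rw [Real.dist_eq]
  exact hy (Set.mem_univ z)

theorem exists_bump (x : X) (O : Set X) (hO : IsOpen O) (hx : x ∈ O) :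
    ∃ b : C(X, ℝ), b x = 1 ∧ (∀ z, 0 ≤ b z ∧ b z ≤ 1) ∧ ∀ z, z ∉ O → b z = 0 := by
  obtain ⟨b, h0, h1, h2⟩ := exists_continuous_zero_one_of_isClosed (X := X) (s := Oᶜ) (t := {x})
    hO.isClosed_compl isClosed_singleton (by simpa using hx)
  exact ⟨b, h1 rfl, h2, fun z hz => h0 hz⟩

theorem peakSet_nonempty [Nonempty Y] {U : C(X, ℝ) → C(Y, ℝ)} {V : C(Y, ℝ) → C(X, ℝ)}
    {K K' L : ℝ} (h : CoarsePair U V K K' L) {r c : ℝ} (hr : 1 ≤ r)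
    (hc : K' * c ≤ 4 * r - 2 * (K * K') * r - (3 * L + 2 * (K * K') + 2 * K' * L)) (x : X) :
    (peakSet U r c x).Nonempty := by
  classical
  let I := {p : C(X, ℝ) × C(X, ℝ) // ‖p.1‖ ≤ r ∧ ‖p.2‖ ≤ r ∧ r - 1 < p.1 x ∧ p.2 x < -r + 1}
  have key := isCompact_univ.inter_iInter_nonempty (X := Y)
    (fun p : I => {y : Y | c ≤ |U p.1.1 y - U p.1.2 y|})
    (fun p => isClosed_le continuous_const (by fun_prop)) ?_
  · obtain ⟨y, -, hy⟩ := key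
    refine ⟨y, fun f g hf hg hfx hgx => ?_⟩
    exact Set.mem_iInter.1 hy (⟨(f, g), hf, hg, hfx, hgx⟩ : I)
  intro u
  let O : Set X := ⋂ p ∈ u, {z | r - 1 < p.1.1 z ∧ p.1.2 z < -r + 1}
  have hO : IsOpen O := by
    refine isOpen_biInter_finset fun p _ => ?_
    exact (isOpen_lt continuous_const p.1.1.continuous).inter
      (isOpen_lt p.1.2.continuous continuous_const)
  have hxO : x ∈ O := Set.mem_iInter₂.2 fun p _ => ⟨p.2.2.2.1, p.2.2.2.2⟩
  obtain ⟨b, hbx, hb01, hb0⟩ := exists_bump x O hO hxO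
  let F : C(X, ℝ) := (2 * r) • b
  let G : C(X, ℝ) := -F
  have hF : ∀ z, F z = 2 * r * b z := fun z => rfl
  have hG : ∀ z, G z = -(2 * r * b z) := fun z => rfl
  obtain ⟨y, hy⟩ := exists_dist_attained (U F) (U G)
  refine ⟨y, trivial, Set.mem_iInter₂.2 fun p hp => ?_⟩
  obtain ⟨⟨f, g⟩, hf, hg, hfx, hgx⟩ := p
  simp only at hf hg
  have d1 : dist F f ≤ r + 1 := by
    rw [ContinuousMap.dist_le (by linarith)]
    intro z
    rw [Real.dist_eq, hF, abs_le]
    have hfz := abs_le_of_norm hf z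
    by_cases hz : z ∈ O
    · have h2 := (Set.mem_iInter₂.1 hz _ hp).1
      simp only at h2
      constructor <;> nlinarith [hb01 z]
    · rw [hb0 z hz]; constructor <;> linarith
  have d2 : dist g G ≤ r + 1 := by
    rw [ContinuousMap.dist_le (by linarith)]
    intro z
    rw [Real.dist_eq, hG, abs_le]
    have hgz := abs_le_of_norm hg z
    by_cases hz : z ∈ O
    · have h2 := (Set.mem_iInter₂.1 hz _ hp).2
      simp only at h2
      constructor <;> nlinarith [hb01 z]
    · rw [hb0 z hz]; constructor <;> linarith
  have d3 : 4 * r ≤ dist F G := by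
    have := abs_sub_le_dist F G x
    rw [hF, hG, hbx] at this
    have := (le_abs_self _).trans this
    linarith
  have d4 : dist F G ≤ K' * dist (U F) (U G) + 3 * L := by
    have t1 := dist_triangle4 F (V (U F)) (V (U G)) G
    have t2 := h.hVU F
    have t3 := h.hVU G
    have t4 := h.hV (U F) (U G)
    rw [dist_comm] at t2
    linarith
  have d5 : dist (U F) (U G) ≤ 2 * (K * (r + 1) + L) + |U f y - U g y| := by
    have t1 := abs_sub_le_dist (U F) (U f) y
    have t2 := abs_sub_le_dist (U g) (U G) y
    have t3 := h.hU F f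
    have t4 := h.hU g G
    have t5 := mul_le_mul_of_nonneg_left d1 h.kpos.le
    have t6 := mul_le_mul_of_nonneg_left d2 h.kpos.le
    have t7 : |U F y - U G y| ≤ |U F y - U f y| + |U f y - U g y| + |U g y - U G y| := by
      have e1 := abs_sub_le (U F y) (U f y) (U G y)
      have e2 := abs_sub_le (U f y) (U g y) (U G y)
      linarith
    linarith
  have d6 := mul_le_mul_of_nonneg_left d5 h.kpos'.le
  have d7 : K' * c ≤ K' * |U f y - U g y| := by nlinarith
  exact le_of_mul_le_mul_left d7 (h.swap.kpos)

/-- Raise `f` so that it takes the value `s` at `y`. -/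
theorem exists_raise {f : C(Y, ℝ)} {s : ℝ} (hf : ‖f‖ ≤ s) (y : Y) :
    ∃ p : C(Y, ℝ), ‖p‖ ≤ s ∧ p y = s ∧ dist p f ≤ s - f y := by
  have hs : 0 ≤ s := (norm_nonneg _).trans hf
  have hfy := abs_le_of_norm hf y
  refine ⟨⟨fun z => min s (f z + (s - f y)), by fun_prop⟩, ?_, by simp, ?_⟩
  · rw [ContinuousMap.norm_le _ hs]
    intro z
    have hfz := abs_le_of_norm hf z
    rw [Real.norm_eq_abs, abs_le]
    exact ⟨le_min (by linarith) (by linarith), min_le_left _ _⟩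
  · rw [ContinuousMap.dist_le (by linarith)]
    intro z
    have hfz := abs_le_of_norm hf z
    rw [Real.dist_eq, abs_le]
    constructor
    · have : f z ≤ min s (f z + (s - f y)) := le_min (by linarith) (by linarith)
      simp only [ContinuousMap.coe_mk]
      linarith
    · have := min_le_right s (f z + (s - f y))
      simp only [ContinuousMap.coe_mk]
      linarith

theorem exists_lower {f : C(Y, ℝ)} {s : ℝ} (hf : ‖f‖ ≤ s) (y : Y) :
    ∃ p : C(Y, ℝ), ‖p‖ ≤ s ∧ p y = -s ∧ dist p f ≤ s + f y := by
  obtain ⟨p, h1, h2, h3⟩ := exists_raise (f := -f) (s := s) (by rwa [norm_neg]) y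
  refine ⟨-p, by rwa [norm_neg], by simp [h2], ?_⟩
  rw [← dist_neg_neg, neg_neg]
  simpa using h3

theorem peakSet_unique_aux {U : C(X, ℝ) → C(Y, ℝ)} {V : C(Y, ℝ) → C(X, ℝ)}
    {K K' L : ℝ} (h : CoarsePair U V K K' L) {s c c' : ℝ}
    (hcc : K' * (2 * s - c) + 4 * L < c') {y : Y} {x' : X}
    (hx' : x' ∈ peakSet V s c' y) {f g : C(X, ℝ)} (hf : ‖U f‖ ≤ s) (hg : ‖U g‖ ≤ s)
    (hfg : f x' = g x') (hc : c ≤ U f y - U g y) : False := by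
  obtain ⟨p, p1, p2, p3⟩ := exists_raise hf y
  obtain ⟨q, q1, q2, q3⟩ := exists_lower hg y
  have k := hx' p q p1 q1 (by linarith) (by linarith)
  have a1 := abs_sub_le_dist (V p) f x'
  have a2 := abs_sub_le_dist (V q) g x'
  have b1 := dist_triangle (V p) (V (U f)) f
  have b2 := dist_triangle (V q) (V (U g)) g
  have c1 := h.hV p (U f)
  have c2 := h.hV q (U g)
  have e1 := h.hVU f
  have e2 := h.hVU g
  have t : |V p x' - V q x'| ≤ |V p x' - f x'| + |V q x' - g x'| := by
    rw [← hfg, abs_sub_comm (V q x')]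
    exact abs_sub_le _ _ _
  have m := mul_le_mul_of_nonneg_left (show dist p (U f) + dist q (U g) ≤ 2 * s - c by linarith)
    h.kpos'.le
  linarith

theorem peakSet_unique {U : C(X, ℝ) → C(Y, ℝ)} {V : C(Y, ℝ) → C(X, ℝ)}
    {K K' L : ℝ} (h : CoarsePair U V K K' L) {r s c c' : ℝ} (hr : 1 ≤ r) (hs : s = K * r + L)
    (hcc : K' * (2 * s - c) + 4 * L < c') {x x' : X} {y : Y} (hy : y ∈ peakSet U r c x)
    (hx' : x' ∈ peakSet V s c' y) : x' = x := by
  by_contra hne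
  obtain ⟨b, hbx, hb01, hb0⟩ := exists_bump x {x'}ᶜ isOpen_compl_singleton
    (by simpa using fun hh : x = x' => hne hh.symm)
  have hbx' : b x' = 0 := hb0 x' (by simp)
  have hn : ‖r • b‖ ≤ r := by
    rw [ContinuousMap.norm_le _ (by linarith)]
    intro z
    have : (r • b) z = r * b z := rfl
    rw [this, Real.norm_eq_abs, abs_le]
    constructor <;> nlinarith [hb01 z]
  have hn' : ‖-(r • b)‖ ≤ r := by rwa [norm_neg]
  have k := hy (r • b) (-(r • b)) hn hn' (by simp [hbx]) (by simp [hbx])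
  have u1 : ‖U (r • b)‖ ≤ s := by
    have := h.hU0 (r • b)
    have := mul_le_mul_of_nonneg_left hn h.kpos.le
    linarith
  have u2 : ‖U (-(r • b))‖ ≤ s := by
    have := h.hU0 (-(r • b))
    have := mul_le_mul_of_nonneg_left hn' h.kpos.le
    linarith
  rcases le_abs.1 k with k | k
  · exact peakSet_unique_aux h hcc hx' u1 u2 (by simp [hbx']) k
  · exact peakSet_unique_aux h hcc hx' u2 u1 (by simp [hbx']) (by linarith)

theorem peakSet_closed (U : C(X, ℝ) → C(Y, ℝ)) (r c : ℝ) :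
    IsClosed {p : X × Y | p.2 ∈ peakSet U r c p.1} := by
  have : {p : X × Y | p.2 ∈ peakSet U r c p.1} =
      ⋂ (f : C(X, ℝ)) (g : C(X, ℝ)) (_ : ‖f‖ ≤ r) (_ : ‖g‖ ≤ r),
        ({p : X × Y | f p.1 ≤ r - 1} ∪ {p | -r + 1 ≤ g p.1} ∪ {p | c ≤ |U f p.2 - U g p.2|}) := by
    ext p
    simp only [peakSet, Set.mem_ofPred_eq, Set.mem_iInter, Set.mem_union]
    refine forall_congr' fun f => forall_congr' fun g => forall_congr' fun _ =>
      forall_congr' fun _ => ?_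
    rw [← not_lt (a := r - 1), ← not_lt (b := -r + 1)]
    tauto
  rw [this]
  refine isClosed_iInter fun f => isClosed_iInter fun g => isClosed_iInter fun _ =>
    isClosed_iInter fun _ => ?_
  refine ((isClosed_le (by fun_prop) continuous_const).union
    (isClosed_le continuous_const (by fun_prop))).union (isClosed_le continuous_const (by fun_prop))

theorem homeo_of_relation {A C : X → Set Y} {B : Y → Set X}
    (hA : ∀ x, (A x).Nonempty) (hB : ∀ y, (B y).Nonempty) (hC : ∀ x, (C x).Nonempty)
    (hAcl : IsClosed {p : X × Y | p.2 ∈ A p.1})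
    (hAB : ∀ x y x', y ∈ A x → x' ∈ B y → x' = x)
    (hBC : ∀ y x y', x ∈ B y → y' ∈ C x → y' = y) : Nonempty (X ≃ₜ Y) := by
  have ab : ∀ x y, y ∈ A x → x ∈ B y := by
    intro x y hy
    obtain ⟨x', hx'⟩ := hB y
    rwa [hAB x y x' hy hx'] at hx'
  have fA : ∀ x y y', y ∈ A x → y' ∈ A x → y = y' := by
    intro x y y' h1 h2
    obtain ⟨z, hz⟩ := hC x
    rw [← hBC y x z (ab _ _ h1) hz, ← hBC y' x z (ab _ _ h2) hz]
  choose φ hφ using hA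
  have gr : {p : X × Y | p.2 ∈ A p.1} = {p : X × Y | p.2 = φ p.1} := by
    ext p
    exact ⟨fun hp => fA _ _ _ hp (hφ _), fun hp => by
      simp only [Set.mem_ofPred_eq] at hp ⊢
      rw [hp]; exact hφ _⟩
  have hcont : Continuous φ := by
    rw [continuous_iff_isClosed]
    intro S hS
    have : φ ⁻¹' S = Prod.fst '' ({p : X × Y | p.2 ∈ A p.1} ∩ Prod.snd ⁻¹' S) := by
      ext x
      rw [gr]
      constructor
      · intro hx
        exact ⟨(x, φ x), ⟨rfl, hx⟩, rfl⟩
      · rintro ⟨⟨a, b⟩, ⟨h1, h2⟩, rfl⟩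
        simp only [Set.mem_ofPred_eq] at h1
        subst h1
        exact h2
    rw [this]
    exact isClosedMap_fst_of_compactSpace _ (hAcl.inter (hS.preimage continuous_snd))
  have hinj : Function.Injective φ := by
    intro x x' hxx
    have h1 := ab x _ (hφ x)
    rw [hxx] at h1
    exact hAB x' _ x (hφ x') h1
  have hsurj : Function.Surjective φ := by
    intro y
    obtain ⟨x, hx⟩ := hB y
    refine ⟨x, ?_⟩
    obtain ⟨z, hz⟩ := hC x
    rw [← hBC y x z hx hz, ← hBC (φ x) x z (ab _ _ (hφ x)) hz]
  exact ⟨hcont.homeoOfEquivCompactToT2 (f := Equiv.ofBijective φ ⟨hinj, hsurj⟩)⟩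

theorem CoarsePair.nonempty [Nonempty X] {U : C(X, ℝ) → C(Y, ℝ)} {V : C(Y, ℝ) → C(X, ℝ)}
    {K K' L : ℝ} (h : CoarsePair U V K K' L) : Nonempty Y := by
  by_contra hY
  rw [not_nonempty_iff] at hY
  obtain ⟨x⟩ := ‹Nonempty X›
  let f : C(X, ℝ) := ContinuousMap.const X (2 * L + 1)
  have e : U f = U 0 := ContinuousMap.ext fun y => isEmptyElim y
  have t1 := h.hVU f
  have t2 := h.hVU 0
  rw [e] at t1
  have t3 := dist_triangle_left f 0 (V (U 0))
  have t4 := abs_sub_le_dist f 0 x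
  have t5 := (le_abs_self _).trans t4
  have t6 : f x - (0 : C(X, ℝ)) x = 2 * L + 1 := by simp [f]
  linarith

theorem CoarsePair.homeo {U : C(X, ℝ) → C(Y, ℝ)} {V : C(Y, ℝ) → C(X, ℝ)}
    {K K' L : ℝ} (h : CoarsePair U V K K' L) (hm : K * K' < 4 / 3) : Nonempty (X ≃ₜ Y) := by
  rcases isEmpty_or_nonempty X with hX | hX
  · have hY : IsEmpty Y := by
      by_contra hY
      rw [not_isEmpty_iff] at hY
      exact (not_isEmpty_iff.2 h.swap.nonempty) hX
    exact ⟨Homeomorph.empty⟩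
  have hY : Nonempty Y := h.nonempty
  have hK := h.kpos
  have hK' := h.kpos'
  have hL := h.lpos
  -- thresholds
  let c : ℝ → ℝ := fun r =>
    (4 * r - 2 * (K * K') * r - (3 * L + 2 * (K * K') + 2 * K' * L)) / K'
  let d : ℝ → ℝ := fun r =>
    (4 * r - 2 * (K' * K) * r - (3 * L + 2 * (K' * K) + 2 * K * L)) / K
  have hc : ∀ r, K' * c r = 4 * r - 2 * (K * K') * r - (3 * L + 2 * (K * K') + 2 * K' * L) :=
    fun r => mul_div_cancel₀ _ hK'.ne'
  have hd : ∀ r, K * d r = 4 * r - 2 * (K' * K) * r - (3 * L + 2 * (K' * K) + 2 * K * L) :=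
    fun r => mul_div_cancel₀ _ hK.ne'
  have hpos : 0 < 8 - 6 * (K * K') := by linarith
  have ev : ∀ᶠ r : ℝ in Filter.atTop, 1 ≤ r ∧ 1 ≤ K * r + L ∧ 1 ≤ K' * (K * r + L) + L ∧
      K' * (2 * (K * r + L) - c r) + 4 * L < d (K * r + L) ∧
      K * (2 * (K' * (K * r + L) + L) - d (K * r + L)) + 4 * L
        < c (K' * (K * r + L) + L) := by
    have e1 : Filter.Tendsto (fun r : ℝ => r) Filter.atTop Filter.atTop := Filter.tendsto_id
    have e2 : Filter.Tendsto (fun r : ℝ => K * r + L) Filter.atTop Filter.atTop :=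
      Filter.tendsto_atTop_add_const_right _ _ (e1.const_mul_atTop hK)
    have e3 : Filter.Tendsto (fun r : ℝ => K' * (K * r + L) + L) Filter.atTop Filter.atTop :=
      Filter.tendsto_atTop_add_const_right _ _ (e2.const_mul_atTop hK')
    have e4 := e1.const_mul_atTop hpos
    have e5 := e2.const_mul_atTop hpos
    have q1 : ∀ r, K' * (2 * (K * r + L) - c r) + 4 * L < d (K * r + L) ↔
        K * (2 * K' * L + (3 * L + 2 * (K * K') + 2 * K' * L) + 4 * L)
         - (4 - 2 * (K * K')) * L + (3 * L + 2 * (K' * K) + 2 * K * L)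
          < K * ((8 - 6 * (K * K')) * r) := by
      intro r
      rw [← mul_lt_mul_iff_right₀ hK, hd, mul_add, mul_sub K', hc]
      constructor <;> intro hh <;> linarith
    have q2 : ∀ r, K * (2 * (K' * r + L) - d r) + 4 * L < c (K' * r + L) ↔
        K' * (2 * K * L + (3 * L + 2 * (K * K') + 2 * K * L) + 4 * L)
         - (4 - 2 * (K * K')) * L + (3 * L + 2 * (K' * K) + 2 * K' * L)
          < K' * ((8 - 6 * (K * K')) * r) := by
      intro r
      rw [← mul_lt_mul_iff_right₀ hK', hc, mul_add, mul_sub K, hd]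
      constructor <;> intro hh <;> linarith
    filter_upwards [e1.eventually_ge_atTop 1, e2.eventually_ge_atTop 1, e3.eventually_ge_atTop 1,
      (e4.const_mul_atTop hK).eventually_gt_atTop _, (e5.const_mul_atTop hK').eventually_gt_atTop _]
      with r h1 h2 h3 h4 h5
    exact ⟨h1, h2, h3, (q1 r).2 h4, (q2 _).2 h5⟩
  obtain ⟨r, h1, h2, h3, h4, h5⟩ := ev.exists
  exact homeo_of_relation
    (A := peakSet U r (c r)) (B := peakSet V (K * r + L) (d (K * r + L)))
    (C := peakSet U (K' * (K * r + L) + L) (c (K' * (K * r + L) + L)))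
    (peakSet_nonempty h h1 (hc _).le) (peakSet_nonempty h.swap h2 (hd _).le)
    (peakSet_nonempty h h3 (hc _).le) (peakSet_closed _ _ _)
    (fun x y x' hy hx => peakSet_unique h h1 rfl h4 hy hx)
    (fun y x y' hy hx => peakSet_unique h.swap h2 rfl h5 hy hx)

end NetDistHelpers

/-- If `d_N(C(X), C(Y)) < 6/5` for compact Hausdorff spaces `X` and `Y`, then `X` and `Y` are
homeomorphic. -/
theorem stmt_13 {X Y : Type} [TopologicalSpace X] [CompactSpace X] [T2Space X]
    [TopologicalSpace Y] [CompactSpace Y] [T2Space Y]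
    (hne : (netDistSet C(X, ℝ) C(Y, ℝ)).Nonempty)
    (hd : netDist C(X, ℝ) C(Y, ℝ) < 6 / 5) :
    Nonempty (X ≃ₜ Y) := by
  obtain ⟨m, hm, hlt⟩ := exists_lt_of_csInf_lt hne hd
  obtain ⟨NE, NF, ε₁, δ₁, ε₂, δ₂, hε₁, -, hε₂, -, ⟨hE, -⟩, ⟨hF, -⟩, T, K, K', hT, hK, hK',
    hTK, hTK', rfl⟩ := hm
  choose a haN ha using hE
  choose b hbN hb using hF
  let e : NE ≃ NF := Equiv.ofBijective T hT
  have hTe : ∀ z, T (e.symm z) = z := fun z => e.apply_symm_apply z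
  let U : C(X, ℝ) → C(Y, ℝ) := fun f => (T ⟨a f, haN f⟩ : C(Y, ℝ))
  let V : C(Y, ℝ) → C(X, ℝ) := fun g => (e.symm ⟨b g, hbN g⟩ : C(X, ℝ))
  have hS : ∀ z w : NF, dist (e.symm z : C(X, ℝ)) (e.symm w : C(X, ℝ)) ≤
      K' * dist (z : C(Y, ℝ)) (w : C(Y, ℝ)) := by
    intro z w
    have := hTK' (e.symm z) (e.symm w)
    rwa [hTe, hTe] at this
  have hU : ∀ f g, dist (U f) (U g) ≤ K * dist f g + 2 * K * ε₁ := by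
    intro f g
    have t1 : dist (U f) (U g) ≤ K * dist (a f) (a g) := hTK _ _
    have t2 := dist_triangle4 (a f) f g (a g)
    have t3 := ha f
    have t4 := ha g
    rw [dist_comm] at t3
    nlinarith
  have hV : ∀ f g, dist (V f) (V g) ≤ K' * dist f g + 2 * K' * ε₂ := by
    intro f g
    have t1 : dist (V f) (V g) ≤ K' * dist (b f) (b g) := hS _ _
    have t2 := dist_triangle4 (b f) f g (b g)
    have t3 := hb f
    have t4 := hb g
    rw [dist_comm] at t3
    nlinarith
  have hVU : ∀ f, dist (V (U f)) f ≤ K' * ε₂ + ε₁ := by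
    intro f
    have t1 := hS ⟨b (U f), hbN _⟩ (T ⟨a f, haN f⟩)
    have t0 : e.symm (T ⟨a f, haN f⟩) = ⟨a f, haN f⟩ := e.symm_apply_apply _
    rw [t0] at t1
    have t1 : dist (V (U f)) (a f) ≤ K' * dist (b (U f)) (U f) := t1
    have t2 := hb (U f)
    have t3 := ha f
    have t4 := dist_triangle_right (V (U f)) f (a f)
    rw [dist_comm] at t2
    nlinarith
  have hUV : ∀ g, dist (U (V g)) g ≤ K * ε₁ + ε₂ := by
    intro g
    have t1 := hTK ⟨a (V g), haN _⟩ (e.symm ⟨b g, hbN g⟩)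
    rw [hTe] at t1
    have t1 : dist (U (V g)) (b g) ≤ K * dist (a (V g)) (V g) := t1
    have t2 := ha (V g)
    have t3 := hb g
    have t4 := dist_triangle_right (U (V g)) g (b g)
    rw [dist_comm] at t2
    nlinarith
  have p1 : 0 < K * ε₁ := mul_pos hK hε₁
  have p2 : 0 < K' * ε₂ := mul_pos hK' hε₂
  have n1 := norm_nonneg (U 0)
  have n2 := norm_nonneg (V 0)
  have h : CoarsePair U V K K'
      (2 * K * ε₁ + 2 * K' * ε₂ + ε₁ + ε₂ + ‖U 0‖ + ‖V 0‖) := by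
    refine ⟨hK, hK', by linarith, fun f g => ?_, fun f g => ?_, fun f => ?_, fun f => ?_,
      fun f => ?_, fun f => ?_⟩
    · linarith [hU f g]
    · linarith [hV f g]
    · linarith [hVU f]
    · linarith [hUV f]
    · have t1 := hU f 0
      have t2 := norm_le_norm_add_norm_sub' (U f) (U 0)
      rw [dist_eq_norm, dist_zero_right] at t1
      linarith
    · have t1 := hV f 0
      have t2 := norm_le_norm_add_norm_sub' (V f) (V 0)
      rw [dist_eq_norm, dist_zero_right] at t1
      linarith
  exact h.homeo (by linarith)
end
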